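/- Let Φ be a Young function such that Φ and its conjugate Φ̃ are of class Δ₂, assume ℳ is countably generated modulo μ-null sets, let {T(x)}_{x∈ℝ^N} be an N-dimensional dynamical system on Ω, and let (ε_k) ⊆ (0,1] with ε_k → 0. Let (u_k) be measurable functions on Q×Ω with sup_k ‖u_k‖_{Φ,Q×Ω} < ∞ which weakly stochastically 2-scale converge to u₀, and assume each u_k admits a weak x-gradient Du_k : Q×Ω → ℝ^N (i.e. ∫_{Q×Ω} u_k (∂φ/∂x_i) ψ dx dμ = −∫_{Q×Ω} (Du_k)_i φ ψ dx dμ for all φ ∈ C_c^∞(Q), all bounded measurable ψ : Ω → ℝ, 1 ≤ i ≤ N) with sup_k ‖|Du_k|‖_{Φ,Q×Ω} < ∞, and that the components of Du_k weakly stochastically 2-scale converge to the components of a measurable V : Q×Ω×ℝ^N → ℝ^N, ℤ^N-periodic in the last variable, with ‖|V|‖_{Φ,Q×Ω×Y} < ∞. Then there exists a measurable u₂ : Q×Ω×ℝ^N → ℝ, ℤ^N-periodic in its last variable, with ‖u₂‖_{Φ,Q×Ω×Y} < ∞, ∫_Y u₂(x,ω,y) dy = 0 for a.e. (x,ω), and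 such that for a.e. (x,ω) ∈ Q×Ω the function u₂(x,ω,·) has weak gradient V(x,ω,·) − ∫_Y V(x,ω,z) dz on the torus: ∫_Y u₂(x,ω,y)(∂g/∂y_i)(y) dy = −∫_Y (V_i(x,ω,y) − ∫_Y V_i(x,ω,z) dz) g(y) dy for every ℤ^N-periodic g ∈ C^∞(ℝ^N) and 1 ≤ i ≤ N. -/

import Mathlib

open MeasureTheory Filter Topology ENNReal

noncomputable section

/-- Euclidean norm on `Fin N → ℝ`. -/
def enorm2 {N : ℕ} (v : Fin N → ℝ) : ℝ := Real.sqrt (∑ i, v i ^ 2)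

/-- `Φ : [0,∞) → [0,∞)` is a Young function: continuous, convex, positive on `(0,∞)`,
with `Φ(t)/t → 0` as `t → 0⁺` and `Φ(t)/t → ∞` as `t → ∞` (so `Φ(0) = 0`). -/
def IsYoung (Φ : ℝ → ℝ) : Prop :=
  ContinuousOn Φ (Set.Ici 0) ∧ ConvexOn ℝ (Set.Ici 0) Φ ∧ Φ 0 = 0 ∧
    (∀ t : ℝ, 0 < t → 0 < Φ t) ∧ (∀ t : ℝ, 0 ≤ t → 0 ≤ Φ t) ∧
    Tendsto (fun t => Φ t / t) (nhdsWithin 0 (Set.Ioi 0)) (nhds 0) ∧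
    Tendsto (fun t => Φ t / t) atTop atTop

/-- The `Δ₂`-condition (at infinity). -/
def Delta2 (Φ : ℝ → ℝ) : Prop :=
  ∃ α : ℝ, 0 < α ∧ ∃ t₀ : ℝ, 0 ≤ t₀ ∧ ∀ t : ℝ, t₀ ≤ t → Φ (2 * t) ≤ α * Φ t

/-- The `Δ'`-condition (at infinity). -/
def DeltaPrime (Φ : ℝ → ℝ) : Prop :=
  ∃ k : ℝ, 0 < k ∧ ∃ t₀ s₀ : ℝ, 0 ≤ t₀ ∧ 0 ≤ s₀ ∧
    ∀ t s : ℝ, t₀ ≤ t → s₀ ≤ s → Φ (t * s) ≤ k * Φ t * Φ s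

/-- The conjugate Young function `Φ̃(t) = sup_{s ≥ 0} (st − Φ(s))`. -/
def conjY (Φ : ℝ → ℝ) (t : ℝ) : ℝ := sSup ((fun s => s * t - Φ s) '' Set.Ici 0)

/-- The Luxemburg norm `‖u‖_{Φ,X} = inf {δ > 0 : ∫_X Φ(|u|/δ) dν ≤ 1}` (`+∞` if no such `δ`). -/
def luxNorm {X : Type*} [MeasurableSpace X] (Φ : ℝ → ℝ) (ν : Measure X) (u : X → ℝ) : ℝ≥0∞ :=
  sInf {d : ℝ≥0∞ | ∃ δ : ℝ, 0 < δ ∧ d = ENNReal.ofReal δ ∧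
    (∫⁻ x, ENNReal.ofReal (Φ (|u x| / δ)) ∂ν) ≤ 1}

/-- An `N`-dimensional dynamical system on `Ω` preserving `μ`. -/
def IsDynSys {N : ℕ} {Ω : Type*} [MeasurableSpace Ω] (μ : Measure Ω)
    (T : (Fin N → ℝ) → Ω → Ω) : Prop :=
  T 0 = id ∧ (∀ x y : Fin N → ℝ, T (x + y) = T x ∘ T y) ∧
    (∀ x : Fin N → ℝ, MeasurePreserving (T x) μ μ) ∧
    Measurable fun p : (Fin N → ℝ) × Ω => T p.1 p.2

/-- `ℤ^N`-periodicity. -/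
def ZPeriodic {N : ℕ} (g : (Fin N → ℝ) → ℝ) : Prop :=
  ∀ (y : Fin N → ℝ) (k : Fin N → ℤ), g (y + fun i => (k i : ℝ)) = g y

/-- The unit cube `Y = [0,1]^N`. -/
def Ycube (N : ℕ) : Set (Fin N → ℝ) := Set.Icc 0 1

/-- `ℳ` is countably generated modulo `μ`-null sets. -/
def CountGenModNull {Ω : Type*} [MeasurableSpace Ω] (μ : Measure Ω) : Prop :=
  ∃ S : ℕ → Set Ω, (∀ n, MeasurableSet (S n)) ∧
    ∀ A : Set Ω, MeasurableSet A →
      ∃ B : Set Ω, MeasurableSet[MeasurableSpace.generateFrom (Set.range S)] B ∧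
        μ (symmDiff A B) = 0

/-- Weak stochastic two-scale convergence of `(u k)` to `u₀` along the sequence `(ε k)`. -/
def WeakStoch2Scale {N : ℕ} {Ω : Type*} [MeasurableSpace Ω] (μ : Measure Ω)
    (T : (Fin N → ℝ) → Ω → Ω) (Q : Set (Fin N → ℝ)) (ε : ℕ → ℝ)
    (u : ℕ → (Fin N → ℝ) → Ω → ℝ) (u₀ : (Fin N → ℝ) → Ω → (Fin N → ℝ) → ℝ) : Prop :=
  ∀ φ : (Fin N → ℝ) → ℝ, ContDiff ℝ (⊤ : ℕ∞) φ → HasCompactSupport φ → tsupport φ ⊆ Q →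
    ∀ ψ : Ω → ℝ, Measurable ψ → (∃ C : ℝ, ∀ ω, |ψ ω| ≤ C) →
      ∀ g : (Fin N → ℝ) → ℝ, Continuous g → ZPeriodic g →
        Tendsto
          (fun k => ∫ x in Q, (∫ ω, u k x ω * φ x * ψ (T ((ε k)⁻¹ • x) ω) *
              g (((ε k) ^ 2)⁻¹ • x) ∂μ))
          atTop
          (nhds (∫ x in Q, (∫ ω, (∫ y in Ycube N, u₀ x ω y * φ x * ψ ω * g y) ∂μ)))


/-!
Symmetry of second derivatives makes the pairings of `∂ᵢ (test)` with `(Du_k)ⱼ` and of `∂ⱼ (test)`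
with `(Du_k)ᵢ` agree. The test function `φ(x) ψ(T(x/ε)ω) g(x/ε²)`, with the observable `ψ` mollified
along the flow, has partial derivatives whose leading part `ε⁻² φ ψ ∂ᵢg` only differentiates in the
fast variable; multiplying by `ε²` and passing to the limit shows that almost every
`V(x, ω, ·)` is curl-free on the torus.

A periodic curl-free field `v` has the potential `y ↦ ∫ a ∈ Y, ∫ t ∈ [0,1], a · v(y - t a)`, up to
its mean value: the average over the base points `y - a` of line integrals along segments.
By Jensen's inequality its modular is controlled by that of `v`, for every Young function.
-/

/-! ### Periodic functions on the unit cube -/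

/-- `ℤ^N`-periodicity of a function with values in an arbitrary type; for real-valued functions
this is `ZPeriodic` by definition. -/
def IsLatticePeriodic {N : ℕ} {β : Type*} (f : (Fin N → ℝ) → β) : Prop :=
  ∀ (y : Fin N → ℝ) (k : Fin N → ℤ), f (y + fun i => (k i : ℝ)) = f y

/-- The integer lattice `ℤ^N` as an additive subgroup of `ℝ^N`, in the form in which Mathlib
provides fundamental domains for it. -/
abbrev integerLattice (N : ℕ) : AddSubgroup (Fin N → ℝ) :=
  (Submodule.span ℤ (Set.range (Pi.basisFun ℝ (Fin N)))).toAddSubgroup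

instance (N : ℕ) : Countable (integerLattice N) :=
  inferInstanceAs (Countable (Submodule.span ℤ (Set.range (Pi.basisFun ℝ (Fin N)))))

instance (N : ℕ) : IsProbabilityMeasure (volume.restrict (Ycube N)) :=
  ⟨by simp [Ycube, Real.volume_Icc_pi]⟩

instance : IsProbabilityMeasure (volume.restrict (Set.Icc (0 : ℝ) 1)) :=
  ⟨by simp⟩

section Periodic

variable {N : ℕ} {β γ : Type*} {f : (Fin N → ℝ) → β}

lemma volume_restrict_fundamentalDomain_eq_Ycube :
    volume.restrict (ZSpan.fundamentalDomain (Pi.basisFun ℝ (Fin N))) =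
      volume.restrict (Ycube N) := by
  rw [ZSpan.fundamentalDomain_pi_basisFun]
  exact Measure.restrict_congr_set Measure.univ_pi_Ico_ae_eq_Icc

lemma exists_int_coe_of_mem_integerLattice {v : Fin N → ℝ} (hv : v ∈ integerLattice N) :
    ∃ k : Fin N → ℤ, v = fun i => (k i : ℝ) := by
  choose k hk using ((Pi.basisFun ℝ (Fin N)).mem_span_iff_repr_mem ℤ v).1 hv
  exact ⟨k, funext fun i => by simpa using (hk i).symm⟩

namespace IsLatticePeriodic

lemma map_vadd (hf : IsLatticePeriodic f) (v : integerLattice N) (y : Fin N → ℝ) :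
    f (v +ᵥ y) = f y := by
  obtain ⟨k, hk⟩ := exists_int_coe_of_mem_integerLattice v.2
  rw [AddSubgroup.vadd_def, hk, vadd_eq_add, add_comm]
  exact hf y k

lemma comp_left (hf : IsLatticePeriodic f) (h : β → γ) : IsLatticePeriodic fun y => h (f y) :=
  fun y k => congrArg h (hf y k)

lemma comp_add_right (hf : IsLatticePeriodic f) (s : Fin N → ℝ) :
    IsLatticePeriodic fun y => f (y + s) :=
  fun y k => by simpa only [add_right_comm] using hf (y + s) k

lemma map_add_single (hf : IsLatticePeriodic f) (i : Fin N) (y : Fin N → ℝ) :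
    f (y + Pi.single i 1) = f y := by
  rw [← hf y (Pi.single i 1)]
  congr 2
  exact funext fun j => by by_cases h : j = i <;> simp [h]

lemma map_fract (hf : IsLatticePeriodic f) (y : Fin N → ℝ) :
    f (fun i => Int.fract (y i)) = f y := by
  rw [← hf _ fun i => ⌊y i⌋]
  exact congrArg f (funext fun i => Int.fract_add_floor (y i))

lemma setLIntegral_comp_add {f : (Fin N → ℝ) → ℝ≥0∞} (hf : IsLatticePeriodic f)
    (s : Fin N → ℝ) : ∫⁻ y in Ycube N, f (y + s) = ∫⁻ y in Ycube N, f y := by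
  have hF := ZSpan.isAddFundamentalDomain' (Pi.basisFun ℝ (Fin N)) volume
  have hshift := (measurePreserving_vadd s volume).setLIntegral_comp_emb
    (measurableEmbedding_const_vadd s) f (ZSpan.fundamentalDomain (Pi.basisFun ℝ (Fin N)))
  rw [Set.image_vadd, (hF.vadd_of_comm (G' := Fin N → ℝ) s).setLIntegral_eq hF f hf.map_vadd]
    at hshift
  simpa only [volume_restrict_fundamentalDomain_eq_Ycube, vadd_eq_add, add_comm s] using hshift

lemma setIntegral_comp_add {f : (Fin N → ℝ) → ℝ} (hf : IsLatticePeriodic f)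
    (s : Fin N → ℝ) : ∫ y in Ycube N, f (y + s) = ∫ y in Ycube N, f y := by
  have hF := ZSpan.isAddFundamentalDomain' (Pi.basisFun ℝ (Fin N)) volume
  have hshift := (measurePreserving_vadd s volume).setIntegral_image_emb
    (measurableEmbedding_const_vadd s) f (ZSpan.fundamentalDomain (Pi.basisFun ℝ (Fin N)))
  rw [Set.image_vadd, (hF.vadd_of_comm (G' := Fin N → ℝ) s).setIntegral_eq hF hf.map_vadd]
    at hshift
  simpa only [volume_restrict_fundamentalDomain_eq_Ycube, vadd_eq_add, add_comm s]
    using hshift.symm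

lemma integrable_comp_add {f : (Fin N → ℝ) → ℝ} (hf : IsLatticePeriodic f)
    (hint : IntegrableOn f (Ycube N)) (s : Fin N → ℝ) :
    IntegrableOn (fun y => f (y + s)) (Ycube N) := by
  have hF := ZSpan.isAddFundamentalDomain' (Pi.basisFun ℝ (Fin N)) volume
  rw [IntegrableOn, ← volume_restrict_fundamentalDomain_eq_Ycube, ← IntegrableOn] at hint ⊢
  have hshift := (measurePreserving_vadd s volume).integrableOn_image
    (measurableEmbedding_const_vadd s) (f := f)
    (s := ZSpan.fundamentalDomain (Pi.basisFun ℝ (Fin N)))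
  rw [Set.image_vadd,
    (hF.vadd_of_comm (G' := Fin N → ℝ) s).integrableOn_iff hF hf.map_vadd] at hshift
  simpa only [Function.comp_def, vadd_eq_add, add_comm s] using hshift.1 hint

lemma exists_forall_abs_le {f : (Fin N → ℝ) → ℝ} (hf : IsLatticePeriodic f)
    (hcont : Continuous f) : ∃ C, ∀ y, |f y| ≤ C := by
  obtain ⟨C, hC⟩ := (isCompact_Icc (a := (0 : Fin N → ℝ)) (b := 1)).exists_bound_of_continuousOn
    hcont.continuousOn
  refine ⟨C, fun y => ?_⟩
  rw [← hf.map_fract y]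
  exact hC _ ⟨fun i => Int.fract_nonneg _, fun i => (Int.fract_lt_one _).le⟩

end IsLatticePeriodic

end Periodic

/-! ### Partial derivatives and test functions -/

/-- The partial derivative `∂g/∂y_i`. -/
abbrev partialDeriv {N : ℕ} (i : Fin N) (g : (Fin N → ℝ) → ℝ) (y : Fin N → ℝ) : ℝ :=
  fderiv ℝ g y (Pi.single i 1)

/-- Smooth `ℤ^N`-periodic functions, the test functions on the torus. -/
structure IsSmoothPeriodic {N : ℕ} (g : (Fin N → ℝ) → ℝ) : Prop where
  contDiff : ContDiff ℝ (⊤ : ℕ∞) g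
  periodic : IsLatticePeriodic g

/-- Test functions on `Q`, i.e. elements of `C_c^∞(Q)` extended by zero. -/
structure IsTestFunction {N : ℕ} (Q : Set (Fin N → ℝ)) (φ : (Fin N → ℝ) → ℝ) : Prop where
  contDiff : ContDiff ℝ (⊤ : ℕ∞) φ
  hasCompactSupport : HasCompactSupport φ
  tsupport_subset : tsupport φ ⊆ Q

section PartialDeriv

variable {N : ℕ} {g : (Fin N → ℝ) → ℝ}

lemma contDiff_partialDeriv (hg : ContDiff ℝ (⊤ : ℕ∞) g) (i : Fin N) :
    ContDiff ℝ (⊤ : ℕ∞) (partialDeriv i g) :=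
  (hg.fderiv_right (by simp)).clm_apply contDiff_const

lemma partialDeriv_comp_add_right (i : Fin N) (g : (Fin N → ℝ) → ℝ) (s y : Fin N → ℝ) :
    partialDeriv i (fun y => g (y + s)) y = partialDeriv i g (y + s) := by
  rw [partialDeriv, fderiv_comp_add_right]

lemma partialDeriv_comm (hg : ContDiff ℝ (⊤ : ℕ∞) g) (i j : Fin N) (y : Fin N → ℝ) :
    partialDeriv i (partialDeriv j g) y = partialDeriv j (partialDeriv i g) y := by
  have hfderiv : DifferentiableAt ℝ (fderiv ℝ g) y :=
    ((hg.fderiv_right (m := (⊤ : ℕ∞)) (by simp)).differentiable (by simp)) y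
  have happly (v w : Fin N → ℝ) : fderiv ℝ (fun z => fderiv ℝ g z v) y w =
      fderiv ℝ (fderiv ℝ g) y w v := by
    rw [fderiv_clm_apply hfderiv (differentiableAt_const v)]
    simp
  have htwo : minSmoothness ℝ 2 ≤ ((⊤ : ℕ∞) : WithTop ℕ∞) := by
    rw [minSmoothness_of_isRCLikeNormedField]
    exact WithTop.coe_le_coe.2 (le_top : (2 : ℕ∞) ≤ ⊤)
  rw [partialDeriv, partialDeriv, happly, happly]
  exact (hg.contDiffAt.isSymmSndFDerivAt htwo).eq _ _

lemma fderiv_apply_eq_sum_partialDeriv (g : (Fin N → ℝ) → ℝ) (y a : Fin N → ℝ) :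
    fderiv ℝ g y a = ∑ j, a j * partialDeriv j g y := by
  conv_lhs => rw [pi_eq_sum_univ' a]
  simp [map_sum]

lemma integral_sum_mul_partialDeriv_segment (hg : ContDiff ℝ (⊤ : ℕ∞) g) (y a : Fin N → ℝ) :
    ∫ t in Set.Icc (0 : ℝ) 1, ∑ j, a j * partialDeriv j g (y + t • a) = g (y + a) - g y := by
  have hderiv (t : ℝ) : HasDerivAt (fun t : ℝ => g (y + t • a))
      (∑ j, a j * partialDeriv j g (y + t • a)) t := by
    rw [← fderiv_apply_eq_sum_partialDeriv]
    have hline : HasDerivAt (fun t : ℝ => y + t • a) a t := by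
      simpa using ((hasDerivAt_id t).smul_const a).const_add y
    exact (hg.differentiable (by simp) _).hasFDerivAt.comp_hasDerivAt t hline
  have hcont (j : Fin N) : Continuous (partialDeriv j g) := (contDiff_partialDeriv hg j).continuous
  rw [integral_Icc_eq_integral_Ioc, ← intervalIntegral.integral_of_le zero_le_one,
    intervalIntegral.integral_eq_sub_of_hasDerivAt (fun t _ => hderiv t)
      (Continuous.intervalIntegrable (by fun_prop) _ _)]
  simp

end PartialDeriv

namespace IsSmoothPeriodic

variable {N : ℕ} {g : (Fin N → ℝ) → ℝ}

protected lemma partialDeriv (hg : IsSmoothPeriodic g) (i : Fin N) :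
    IsSmoothPeriodic (partialDeriv i g) where
  contDiff := contDiff_partialDeriv hg.contDiff i
  periodic y k := by
    rw [← partialDeriv_comp_add_right]
    exact congrArg (partialDeriv i · y) (funext fun z => hg.periodic z k)

lemma comp_add_right (hg : IsSmoothPeriodic g) (s : Fin N → ℝ) :
    IsSmoothPeriodic fun y => g (y + s) :=
  ⟨hg.contDiff.comp (contDiff_id.add contDiff_const), hg.periodic.comp_add_right s⟩

protected lemma continuous (hg : IsSmoothPeriodic g) : Continuous g := hg.contDiff.continuous

lemma exists_forall_abs_le (hg : IsSmoothPeriodic g) : ∃ C, ∀ y, |g y| ≤ C :=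
  hg.periodic.exists_forall_abs_le hg.continuous

lemma integral_partialDeriv_eq_zero (hg : IsSmoothPeriodic g) (i : Fin N) :
    ∫ y in Ycube N, partialDeriv i g y = 0 := by
  have hcont : Continuous (partialDeriv i g) := (hg.partialDeriv i).continuous
  obtain ⟨C, hC⟩ := (hg.partialDeriv i).exists_forall_abs_le
  have hsegment (y : Fin N → ℝ) :
      ∫ t in Set.Icc (0 : ℝ) 1, partialDeriv i g (y + t • Pi.single i 1) = 0 := by
    have h := integral_sum_mul_partialDeriv_segment hg.contDiff y (Pi.single i 1)
    simp only [← fderiv_apply_eq_sum_partialDeriv, hg.periodic.map_add_single, sub_self] at h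
    exact h
  calc ∫ y in Ycube N, partialDeriv i g y
      = ∫ t in Set.Icc (0 : ℝ) 1, ∫ y in Ycube N,
          partialDeriv i g (y + t • Pi.single i 1) := by
        simp only [(hg.partialDeriv i).periodic.setIntegral_comp_add]
        simp
    _ = ∫ y in Ycube N, ∫ t in Set.Icc (0 : ℝ) 1,
          partialDeriv i g (y + t • Pi.single i 1) :=
        integral_integral_swap <| Integrable.of_bound (C := C)
          (Continuous.aestronglyMeasurable (by fun_prop)) (Eventually.of_forall fun p => hC _)
    _ = 0 := by simp only [hsegment, integral_zero]

end IsSmoothPeriodic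

namespace IsTestFunction

variable {N : ℕ} {Q : Set (Fin N → ℝ)} {φ : (Fin N → ℝ) → ℝ}

protected lemma partialDeriv (hφ : IsTestFunction Q φ) (i : Fin N) :
    IsTestFunction Q (partialDeriv i φ) where
  contDiff := contDiff_partialDeriv hφ.contDiff i
  hasCompactSupport := hφ.hasCompactSupport.fderiv_apply (𝕜 := ℝ) _
  tsupport_subset := (tsupport_fderiv_apply_subset ℝ _).trans hφ.tsupport_subset

lemma mul_right (hφ : IsTestFunction Q φ) {g : (Fin N → ℝ) → ℝ}
    (hg : ContDiff ℝ (⊤ : ℕ∞) g) : IsTestFunction Q fun x => φ x * g x where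
  contDiff := hφ.contDiff.mul hg
  hasCompactSupport := hφ.hasCompactSupport.mul_right
  tsupport_subset := (tsupport_mul_subset_left (f := φ) (g := g)).trans hφ.tsupport_subset

protected lemma continuous (hφ : IsTestFunction Q φ) : Continuous φ := hφ.contDiff.continuous

lemma exists_forall_abs_le (hφ : IsTestFunction Q φ) : ∃ C, ∀ x, |φ x| ≤ C :=
  hφ.hasCompactSupport.exists_bound_of_continuous hφ.continuous

protected lemma integrable (hφ : IsTestFunction Q φ) : Integrable φ :=
  hφ.continuous.integrable_of_hasCompactSupport hφ.hasCompactSupport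

end IsTestFunction

/-! ### Young functions and the Luxemburg norm -/

/-- The modular `∫ Φ(|f|) dν`, whose sublevel set at `1` is the unit ball of the Luxemburg norm. -/
def modular {X : Type*} [MeasurableSpace X] (Φ : ℝ → ℝ) (ν : Measure X) (f : X → ℝ) : ℝ≥0∞ :=
  ∫⁻ x, ENNReal.ofReal (Φ |f x|) ∂ν

namespace IsYoung

variable {Φ : ℝ → ℝ} {X : Type*} [MeasurableSpace X] {ν : Measure X} {f h : X → ℝ}

lemma continuous_comp_abs (hΦ : IsYoung Φ) : Continuous fun t : ℝ => Φ |t| :=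
  hΦ.1.comp_continuous continuous_abs abs_nonneg

lemma convexOn (hΦ : IsYoung Φ) : ConvexOn ℝ (Set.Ici 0) Φ := hΦ.2.1

lemma nonneg_comp_abs (hΦ : IsYoung Φ) (t : ℝ) : 0 ≤ Φ |t| := hΦ.2.2.2.2.1 _ (abs_nonneg t)

lemma le_of_le (hΦ : IsYoung Φ) {s t : ℝ} (hs : 0 ≤ s) (hst : s ≤ t) : Φ s ≤ Φ t := by
  rcases hs.eq_or_lt with rfl | hs
  · rw [hΦ.2.2.1]
    exact hΦ.2.2.2.2.1 t hst
  · refine hΦ.convexOn.le_right_of_left_le'' (Set.mem_Ici.2 le_rfl) (hs.le.trans hst) hs hst ?_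
    rw [hΦ.2.2.1]
    exact hΦ.2.2.2.2.1 s hs.le

lemma exists_abs_le_add (hΦ : IsYoung Φ) : ∃ M : ℝ, ∀ t, |t| ≤ M + Φ |t| := by
  obtain ⟨-, -, -, -, -, -, hsuperlinear⟩ := id hΦ
  obtain ⟨M, hM⟩ := eventually_atTop.1 (hsuperlinear.eventually_ge_atTop 1)
  refine ⟨max M 1, fun t => ?_⟩
  have hΦt := hΦ.nonneg_comp_abs t
  rcases le_total (max M 1) |t| with ht | ht
  · have hpos : 0 < |t| := one_pos.trans_le ((le_max_right M 1).trans ht)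
    have hle := (one_le_div hpos).1 (hM |t| ((le_max_left M 1).trans ht))
    linarith [le_max_right M 1]
  · linarith

lemma integrable_comp_abs (hΦ : IsYoung Φ) (hf : AEStronglyMeasurable f ν)
    (hfin : modular Φ ν f ≠ ⊤) : Integrable (fun x => Φ |f x|) ν := by
  refine ⟨hΦ.continuous_comp_abs.comp_aestronglyMeasurable hf, ?_⟩
  rw [hasFiniteIntegral_iff_ofReal (Eventually.of_forall fun x => hΦ.nonneg_comp_abs _)]
  exact hfin.lt_top

lemma integrable_of_modular_ne_top [IsFiniteMeasure ν] (hΦ : IsYoung Φ)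
    (hf : AEStronglyMeasurable f ν) (hfin : modular Φ ν f ≠ ⊤) : Integrable f ν := by
  obtain ⟨M, hM⟩ := hΦ.exists_abs_le_add
  exact ((integrable_const M).add (hΦ.integrable_comp_abs hf hfin)).mono' hf
    (Eventually.of_forall fun x => hM (f x))

lemma ofReal_abs_integral_le_modular [IsProbabilityMeasure ν] (hΦ : IsYoung Φ)
    (hf : AEStronglyMeasurable f ν) (hhf : ∀ᵐ x ∂ν, |h x| ≤ |f x|) :
    ENNReal.ofReal (Φ |∫ x, h x ∂ν|) ≤ modular Φ ν f := by
  by_cases hfin : modular Φ ν f = ⊤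
  · exact hfin ▸ le_top
  have hΦf := hΦ.integrable_comp_abs hf hfin
  have hfabs : Integrable (fun x => |f x|) ν := (hΦ.integrable_of_modular_ne_top hf hfin).abs
  rw [modular, ← ofReal_integral_eq_lintegral_ofReal hΦf
    (Eventually.of_forall fun x => hΦ.nonneg_comp_abs _)]
  refine ENNReal.ofReal_le_ofReal ?_
  calc Φ |∫ x, h x ∂ν|
      ≤ Φ (∫ x, |f x| ∂ν) :=
        hΦ.le_of_le (abs_nonneg _)
          ((Real.norm_eq_abs _).ge.trans (norm_integral_le_of_norm_le hfabs hhf))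
    _ ≤ ∫ x, Φ |f x| ∂ν :=
        hΦ.convexOn.map_integral_le hΦ.1 isClosed_Ici
          (Eventually.of_forall fun x => abs_nonneg (f x)) hfabs hΦf

lemma comp_abs_sub_div_two_le (hΦ : IsYoung Φ) (a b : ℝ) :
    Φ |(a - b) / 2| ≤ (Φ |a| + Φ |b|) / 2 := by
  calc Φ |(a - b) / 2|
      ≤ Φ ((1 / 2 : ℝ) • |a| + (1 / 2 : ℝ) • |b|) := by
        refine hΦ.le_of_le (abs_nonneg _) ?_
        rw [abs_div, abs_two, smul_eq_mul, smul_eq_mul]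
        linarith [abs_sub a b]
    _ ≤ (1 / 2 : ℝ) • Φ |a| + (1 / 2 : ℝ) • Φ |b| :=
        hΦ.convexOn.2 (abs_nonneg a) (abs_nonneg b) (by norm_num) (by norm_num) (by norm_num)
    _ = (Φ |a| + Φ |b|) / 2 := by
        rw [smul_eq_mul, smul_eq_mul]
        ring

lemma modular_sub_integral_div_two_le [IsProbabilityMeasure ν] (hΦ : IsYoung Φ)
    (hf : AEStronglyMeasurable f ν) :
    modular Φ ν (fun x => (f x - ∫ z, f z ∂ν) / 2) ≤ modular Φ ν f := by
  have hmean : ENNReal.ofReal (Φ |∫ z, f z ∂ν|) ≤ modular Φ ν f :=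
    hΦ.ofReal_abs_integral_le_modular hf (Eventually.of_forall fun x => le_rfl)
  calc modular Φ ν (fun x => (f x - ∫ z, f z ∂ν) / 2)
      ≤ ∫⁻ x, (ENNReal.ofReal (Φ |f x|) + ENNReal.ofReal (Φ |∫ z, f z ∂ν|)) / 2 ∂ν := by
        refine lintegral_mono fun x => ?_
        rw [← ENNReal.ofReal_add (hΦ.nonneg_comp_abs _) (hΦ.nonneg_comp_abs _),
          ← ENNReal.ofReal_ofNat 2, ← ENNReal.ofReal_div_of_pos two_pos]
        exact ENNReal.ofReal_le_ofReal (hΦ.comp_abs_sub_div_two_le _ _)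
    _ = (modular Φ ν f + ENNReal.ofReal (Φ |∫ z, f z ∂ν|)) / 2 := by
        simp only [div_eq_mul_inv]
        rw [lintegral_mul_const' _ _ (by simp), lintegral_add_right _ measurable_const,
          lintegral_const, measure_univ, mul_one, modular]
    _ ≤ (modular Φ ν f + modular Φ ν f) / 2 := by gcongr
    _ = modular Φ ν f := by rw [ENNReal.add_div, ENNReal.add_halves]

end IsYoung

section LuxemburgNorm

variable {N : ℕ} {Φ : ℝ → ℝ} {X : Type*} [MeasurableSpace X] {ν : Measure X}

lemma luxNorm_lt_top_iff {f : X → ℝ} :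
    luxNorm Φ ν f < ⊤ ↔ ∃ δ : ℝ, 0 < δ ∧ modular Φ ν (fun x => f x / δ) ≤ 1 := by
  have hmodular {δ : ℝ} (hδ : 0 < δ) :
      modular Φ ν (fun x => f x / δ) = ∫⁻ x, ENNReal.ofReal (Φ (|f x| / δ)) ∂ν := by
    simp only [modular, abs_div, abs_of_pos hδ]
  rw [luxNorm, sInf_lt_iff]
  constructor
  · rintro ⟨_, ⟨δ, hδ, rfl, hle⟩, -⟩
    exact ⟨δ, hδ, (hmodular hδ).trans_le hle⟩
  · rintro ⟨δ, hδ, hle⟩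
    exact ⟨_, ⟨δ, hδ, rfl, (hmodular hδ).symm.trans_le hle⟩, ENNReal.ofReal_lt_top⟩

lemma integrable_of_luxNorm_lt_top [IsFiniteMeasure ν] (hΦ : IsYoung Φ) {f : X → ℝ}
    (hf : AEStronglyMeasurable f ν) (hlux : luxNorm Φ ν f < ⊤) : Integrable f ν := by
  obtain ⟨δ, hδ, hle⟩ := luxNorm_lt_top_iff.1 hlux
  have hdiv : Integrable (fun x => f x / δ) ν :=
    hΦ.integrable_of_modular_ne_top (by fun_prop) (hle.trans_lt one_lt_top).ne
  simpa only [div_mul_cancel₀ _ hδ.ne'] using hdiv.mul_const δ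

lemma enorm2_nonneg (v : Fin N → ℝ) : 0 ≤ enorm2 v := Real.sqrt_nonneg _

lemma abs_apply_le_enorm2 (v : Fin N → ℝ) (i : Fin N) : |v i| ≤ enorm2 v :=
  Real.abs_le_sqrt <|
    Finset.single_le_sum (f := fun i => v i ^ 2) (fun _ _ => sq_nonneg _) (Finset.mem_univ i)

lemma measurable_enorm2 : Measurable (enorm2 : (Fin N → ℝ) → ℝ) := by
  unfold enorm2
  fun_prop

lemma integrable_apply_of_luxNorm_enorm2_lt_top [IsFiniteMeasure ν] (hΦ : IsYoung Φ)
    {f : X → Fin N → ℝ} (hf : Measurable f) (hlux : luxNorm Φ ν (fun x => enorm2 (f x)) < ⊤)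
    (i : Fin N) : Integrable (fun x => f x i) ν :=
  (integrable_of_luxNorm_lt_top hΦ (measurable_enorm2.comp hf).aestronglyMeasurable hlux).mono'
    (by fun_prop) (Eventually.of_forall fun x => abs_apply_le_enorm2 _ _)

end LuxemburgNorm

/-! ### The potential of a periodic curl-free field -/

/-- Distributional curl-freeness `∂ⱼ vᵢ = ∂ᵢ vⱼ` of a field on the torus, tested against smooth
periodic functions. -/
def IsCurlFree {N : ℕ} (v : (Fin N → ℝ) → Fin N → ℝ) : Prop :=
  ∀ g, IsSmoothPeriodic g → ∀ i j, ∫ y in Ycube N, v y i * partialDeriv j g y =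
    ∫ y in Ycube N, v y j * partialDeriv i g y

/-- The distribution of a pair `(a, t)`, uniform on `Y × [0,1]`, which parametrises the points
`y - t • a` of the segments that join `y` to the points of `y - Y`. -/
def segmentMeasure (N : ℕ) : Measure ((Fin N → ℝ) × ℝ) :=
  (volume.restrict (Ycube N)).prod (volume.restrict (Set.Icc 0 1))

instance (N : ℕ) : IsProbabilityMeasure (segmentMeasure N) := by
  unfold segmentMeasure
  infer_instance

/-- The line integral of `v` from `y - a` to `y`, averaged over `a ∈ Y`: a potential of a periodic
curl-free field, given by a formula that is defined for every integrable field. -/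
def segmentPotential {N : ℕ} (v : (Fin N → ℝ) → Fin N → ℝ) (y : Fin N → ℝ) : ℝ :=
  ∫ r, ∑ j, r.1 j * v (y - r.2 • r.1) j ∂segmentMeasure N

/-- The segment potential normalised to have mean zero over `Y`. -/
def corrector {N : ℕ} (v : (Fin N → ℝ) → Fin N → ℝ) (y : Fin N → ℝ) : ℝ :=
  segmentPotential v y - ∫ z in Ycube N, segmentPotential v z

section ScalarDuality

variable {N : ℕ} {f b : (Fin N → ℝ) → ℝ} {C : ℝ}

lemma ae_segmentMeasure_abs_apply_le_one :
    ∀ᵐ r ∂segmentMeasure N, ∀ j, |r.1 j| ≤ 1 := by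
  have hcube : ∀ᵐ a ∂volume.restrict (Ycube N), ∀ j, |a j| ≤ 1 :=
    (ae_restrict_iff' measurableSet_Icc).2 <| Eventually.of_forall fun a ha j =>
      (abs_of_nonneg (ha.1 j)).trans_le (ha.2 j)
  exact Measure.quasiMeasurePreserving_fst.ae hcube

lemma ae_abs_apply_mul_le (hbC : ∀ y, |b y| ≤ C) (j : Fin N)
    (p : (Fin N → ℝ) × ((Fin N → ℝ) × ℝ) → Fin N → ℝ) :
    ∀ᵐ q ∂(volume.restrict (Ycube N)).prod (segmentMeasure N), ‖q.2.1 j * b (p q)‖ ≤ C := by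
  filter_upwards [Measure.quasiMeasurePreserving_snd.ae ae_segmentMeasure_abs_apply_le_one]
    with q hq
  rw [norm_mul]
  exact (mul_le_of_le_one_left (norm_nonneg _) (hq j)).trans (hbC _)

lemma integrable_comp_sub_segment (hfm : Measurable f) (hfp : IsLatticePeriodic f)
    (hfi : IntegrableOn f (Ycube N)) :
    Integrable (fun q : (Fin N → ℝ) × ((Fin N → ℝ) × ℝ) => f (q.1 - q.2.2 • q.2.1))
      ((volume.restrict (Ycube N)).prod (segmentMeasure N)) := by
  have hmeas : Measurable fun q : (Fin N → ℝ) × ((Fin N → ℝ) × ℝ) =>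
      f (q.1 - q.2.2 • q.2.1) := by fun_prop
  rw [integrable_prod_iff' hmeas.aestronglyMeasurable]
  simp only [sub_eq_add_neg]
  refine ⟨Eventually.of_forall fun r => hfp.integrable_comp_add hfi _, ?_⟩
  simp only [(hfp.comp_left (‖·‖)).setIntegral_comp_add]
  exact integrable_const _

lemma integrable_apply_mul_comp_sub_segment_mul (hfm : Measurable f) (hfp : IsLatticePeriodic f)
    (hfi : IntegrableOn f (Ycube N)) (hbm : Measurable b) (hbC : ∀ y, |b y| ≤ C) (j : Fin N) :
    Integrable (fun q : (Fin N → ℝ) × ((Fin N → ℝ) × ℝ) =>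
        q.2.1 j * f (q.1 - q.2.2 • q.2.1) * b q.1)
      ((volume.restrict (Ycube N)).prod (segmentMeasure N)) :=
  ((integrable_comp_sub_segment hfm hfp hfi).mul_bdd (c := C)
      (g := fun q => q.2.1 j * b q.1) (by fun_prop) (ae_abs_apply_mul_le hbC j Prod.fst)).congr
    (Eventually.of_forall fun q => by ring)

lemma integrable_mul_apply_mul_comp_add_segment (hfi : IntegrableOn f (Ycube N))
    (hbm : Measurable b) (hbC : ∀ y, |b y| ≤ C) (j : Fin N) :
    Integrable (fun q : (Fin N → ℝ) × ((Fin N → ℝ) × ℝ) =>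
        f q.1 * (q.2.1 j * b (q.1 + q.2.2 • q.2.1)))
      ((volume.restrict (Ycube N)).prod (segmentMeasure N)) :=
  (hfi.integrable.comp_fst (segmentMeasure N)).mul_bdd (c := C) (by fun_prop)
    (ae_abs_apply_mul_le hbC j fun q => q.1 + q.2.2 • q.2.1)

lemma setIntegral_comp_sub_mul (hfp : IsLatticePeriodic f) (hbp : IsLatticePeriodic b)
    (s : Fin N → ℝ) :
    ∫ y in Ycube N, f (y - s) * b y = ∫ y in Ycube N, f y * b (y + s) := by
  have hprod : IsLatticePeriodic fun y => f (y - s) * b y := fun y k => by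
    simp only
    rw [hbp, add_sub_right_comm, hfp]
  simpa only [add_sub_cancel_right] using (hprod.setIntegral_comp_add s).symm

lemma setIntegral_integral_segment_mul (hfm : Measurable f) (hfp : IsLatticePeriodic f)
    (hfi : IntegrableOn f (Ycube N)) (hbm : Measurable b) (hbp : IsLatticePeriodic b)
    (hbC : ∀ y, |b y| ≤ C) (j : Fin N) :
    ∫ y in Ycube N, (∫ r, r.1 j * f (y - r.2 • r.1) ∂segmentMeasure N) * b y =
      ∫ r, r.1 j * (∫ y in Ycube N, f y * b (y + r.2 • r.1)) ∂segmentMeasure N := by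
  simp only [← integral_mul_const]
  rw [integral_integral_swap (integrable_apply_mul_comp_sub_segment_mul hfm hfp hfi hbm hbC j)]
  simp only [mul_assoc, integral_const_mul, setIntegral_comp_sub_mul hfp hbp]

lemma integral_segment_setIntegral_mul (hfi : IntegrableOn f (Ycube N)) (hbm : Measurable b)
    (hbC : ∀ y, |b y| ≤ C) (j : Fin N) :
    ∫ r, r.1 j * (∫ y in Ycube N, f y * b (y + r.2 • r.1)) ∂segmentMeasure N =
      ∫ y in Ycube N, f y * ∫ r, r.1 j * b (y + r.2 • r.1) ∂segmentMeasure N := by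
  simp only [← integral_const_mul, mul_left_comm _ (f _)]
  exact (integral_integral_swap (integrable_mul_apply_mul_comp_add_segment hfi hbm hbC j)).symm

end ScalarDuality

section Corrector

variable {N : ℕ} {v : (Fin N → ℝ) → Fin N → ℝ} {b g : (Fin N → ℝ) → ℝ} {C : ℝ}

lemma isLatticePeriodic_segmentPotential (hvp : IsLatticePeriodic v) :
    IsLatticePeriodic (segmentPotential v) := fun y k => by
  simp only [segmentPotential, add_sub_right_comm, hvp _ k]

lemma integrable_segmentPotential_integrand (hvm : Measurable v) (hvp : IsLatticePeriodic v)
    (hvi : ∀ j, IntegrableOn (fun y => v y j) (Ycube N)) :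
    Integrable (fun q : (Fin N → ℝ) × ((Fin N → ℝ) × ℝ) =>
        ∑ j, q.2.1 j * v (q.1 - q.2.2 • q.2.1) j)
      ((volume.restrict (Ycube N)).prod (segmentMeasure N)) :=
  integrable_finsetSum _ fun j _ => by
    simpa only [mul_one] using integrable_apply_mul_comp_sub_segment_mul (b := fun _ => 1) (C := 1)
      (by fun_prop) (hvp.comp_left (· j)) (hvi j) measurable_const (fun _ => by simp) j

lemma integrable_segmentPotential (hvm : Measurable v) (hvp : IsLatticePeriodic v)
    (hvi : ∀ j, IntegrableOn (fun y => v y j) (Ycube N)) :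
    IntegrableOn (segmentPotential v) (Ycube N) :=
  (integrable_segmentPotential_integrand hvm hvp hvi).integral_prod_left

lemma setIntegral_segmentPotential_mul (hvm : Measurable v) (hvp : IsLatticePeriodic v)
    (hvi : ∀ j, IntegrableOn (fun y => v y j) (Ycube N)) (hbm : Measurable b)
    (hbp : IsLatticePeriodic b) (hbC : ∀ y, |b y| ≤ C) :
    ∫ y in Ycube N, segmentPotential v y * b y =
      ∑ j, ∫ r, r.1 j * (∫ y in Ycube N, v y j * b (y + r.2 • r.1)) ∂segmentMeasure N := by
  have hint (j : Fin N) := integrable_apply_mul_comp_sub_segment_mul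
    (f := fun y => v y j) (by fun_prop) (hvp.comp_left (· j)) (hvi j) hbm hbC j
  have hfub : ∫ y in Ycube N, segmentPotential v y * b y = ∫ y in Ycube N,
      ∑ j, (∫ r, r.1 j * v (y - r.2 • r.1) j ∂segmentMeasure N) * b y := by
    refine integral_congr_ae ?_
    filter_upwards [ae_all_iff.2 fun j => (hint j).prod_right_ae] with y hy
    simp only [← integral_mul_const]
    rw [← integral_finsetSum _ fun j _ => hy j, segmentPotential, ← integral_mul_const]
    simp only [Finset.sum_mul]
  rw [hfub, integral_finsetSum]
  · exact Finset.sum_congr rfl fun j _ => setIntegral_integral_segment_mul (by fun_prop)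
      (hvp.comp_left (· j)) (hvi j) hbm hbp hbC j
  · intro j _
    simp only [← integral_mul_const]
    exact (hint j).integral_prod_left

lemma sum_integral_segment_partialDeriv (hg : IsSmoothPeriodic g) (y : Fin N → ℝ) :
    ∑ j, ∫ r, r.1 j * partialDeriv j g (y + r.2 • r.1) ∂segmentMeasure N =
      (∫ z in Ycube N, g z) - g y := by
  have hint (j : Fin N) : Integrable (fun r : (Fin N → ℝ) × ℝ =>
      r.1 j * partialDeriv j g (y + r.2 • r.1)) (segmentMeasure N) := by
    obtain ⟨C, hC⟩ := (hg.partialDeriv j).exists_forall_abs_le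
    have hcont := (hg.partialDeriv j).continuous
    refine Integrable.of_bound (C := C) (by fun_prop) ?_
    filter_upwards [ae_segmentMeasure_abs_apply_le_one] with r hr
    rw [norm_mul]
    exact (mul_le_of_le_one_left (norm_nonneg _) (hr j)).trans (hC _)
  have hshift : IntegrableOn (fun a => g (y + a)) (Ycube N) :=
    (hg.continuous.comp (continuous_const_add y)).continuousOn.integrableOn_compact isCompact_Icc
  calc ∑ j, ∫ r, r.1 j * partialDeriv j g (y + r.2 • r.1) ∂segmentMeasure N
      = ∫ a in Ycube N, ∫ t in Set.Icc (0 : ℝ) 1,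
          ∑ j, a j * partialDeriv j g (y + t • a) := by
        rw [← integral_finsetSum _ fun j _ => hint j]
        exact integral_prod _ (integrable_finsetSum _ fun j _ => hint j)
    _ = ∫ a in Ycube N, (g (y + a) - g y) := by
        simp only [integral_sum_mul_partialDeriv_segment hg.contDiff]
    _ = (∫ z in Ycube N, g z) - g y := by
        rw [integral_sub hshift (integrable_const _), integral_const, probReal_univ,
          one_smul]
        simp only [add_comm y, hg.periodic.setIntegral_comp_add]

lemma setIntegral_segmentPotential_mul_partialDeriv (hvm : Measurable v)
    (hvp : IsLatticePeriodic v) (hvi : ∀ j, IntegrableOn (fun y => v y j) (Ycube N))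
    (hcurl : IsCurlFree v) (hg : IsSmoothPeriodic g) (i : Fin N) :
    ∫ y in Ycube N, segmentPotential v y * partialDeriv i g y =
      ∫ y in Ycube N, v y i * ((∫ z in Ycube N, g z) - g y) := by
  choose C hC using fun j => (hg.partialDeriv j).exists_forall_abs_le
  have hmeas (j : Fin N) : Measurable (partialDeriv j g) :=
    (hg.partialDeriv j).continuous.measurable
  calc ∫ y in Ycube N, segmentPotential v y * partialDeriv i g y
      = ∑ j, ∫ r, r.1 j * (∫ y in Ycube N, v y j * partialDeriv i g (y + r.2 • r.1))
          ∂segmentMeasure N :=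
        setIntegral_segmentPotential_mul hvm hvp hvi (hmeas i) (hg.partialDeriv i).periodic (hC i)
    _ = ∑ j, ∫ r, r.1 j * (∫ y in Ycube N, v y i * partialDeriv j g (y + r.2 • r.1))
          ∂segmentMeasure N := by
        simp only [← partialDeriv_comp_add_right, hcurl _ (hg.comp_add_right _) i]
    _ = ∑ j, ∫ y in Ycube N, v y i *
          ∫ r, r.1 j * partialDeriv j g (y + r.2 • r.1) ∂segmentMeasure N :=
        Finset.sum_congr rfl fun j _ => integral_segment_setIntegral_mul (hvi i) (hmeas j) (hC j) j
    _ = ∫ y in Ycube N, v y i * ((∫ z in Ycube N, g z) - g y) := by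
        rw [← integral_finsetSum]
        · simp only [← Finset.mul_sum, sum_integral_segment_partialDeriv hg]
        · intro j _
          simp only [← integral_const_mul]
          exact (integrable_mul_apply_mul_comp_add_segment (hvi i) (hmeas j) (hC j)
            j).integral_prod_left

lemma isLatticePeriodic_corrector (hvp : IsLatticePeriodic v) :
    IsLatticePeriodic (corrector v) :=
  (isLatticePeriodic_segmentPotential hvp).comp_left (· - ∫ z in Ycube N, segmentPotential v z)

lemma setIntegral_corrector_eq_zero (hvm : Measurable v) (hvp : IsLatticePeriodic v)
    (hvi : ∀ j, IntegrableOn (fun y => v y j) (Ycube N)) :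
    ∫ y in Ycube N, corrector v y = 0 := by
  unfold corrector
  rw [integral_sub (integrable_segmentPotential hvm hvp hvi) (integrable_const _)]
  simp

lemma setIntegral_corrector_mul_partialDeriv (hvm : Measurable v) (hvp : IsLatticePeriodic v)
    (hvi : ∀ j, IntegrableOn (fun y => v y j) (Ycube N)) (hcurl : IsCurlFree v)
    (hg : IsSmoothPeriodic g) (i : Fin N) :
    ∫ y in Ycube N, corrector v y * partialDeriv i g y =
      -∫ y in Ycube N, (v y i - ∫ z in Ycube N, v z i) * g y := by
  obtain ⟨C, hC⟩ := hg.exists_forall_abs_le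
  obtain ⟨D, hD⟩ := (hg.partialDeriv i).exists_forall_abs_le
  have hpot : IntegrableOn (fun y => segmentPotential v y * partialDeriv i g y) (Ycube N) :=
    (integrable_segmentPotential hvm hvp hvi).mul_bdd (c := D)
      (hg.partialDeriv i).continuous.aestronglyMeasurable (Eventually.of_forall hD)
  have hderiv : IntegrableOn (partialDeriv i g) (Ycube N) :=
    (hg.partialDeriv i).continuous.continuousOn.integrableOn_compact isCompact_Icc
  have hgint : IntegrableOn g (Ycube N) :=
    hg.continuous.continuousOn.integrableOn_compact isCompact_Icc
  have hvg : IntegrableOn (fun y => v y i * g y) (Ycube N) :=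
    (hvi i).mul_bdd (c := C) hg.continuous.aestronglyMeasurable (Eventually.of_forall hC)
  simp only [corrector, sub_mul]
  rw [integral_sub hpot (hderiv.const_mul _), integral_const_mul,
    hg.integral_partialDeriv_eq_zero i, mul_zero, sub_zero,
    setIntegral_segmentPotential_mul_partialDeriv hvm hvp hvi hcurl hg i]
  simp only [mul_sub]
  rw [integral_sub ((hvi i).mul_const _) hvg, integral_sub hvg (hgint.const_mul _),
    integral_mul_const, integral_const_mul]
  ring

lemma measurable_segmentPotential {X : Type*} [MeasurableSpace X]
    {V : X → (Fin N → ℝ) → Fin N → ℝ} (hV : Measurable fun p : X × (Fin N → ℝ) => V p.1 p.2) :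
    Measurable fun p : X × (Fin N → ℝ) => segmentPotential (V p.1) p.2 := by
  refine (StronglyMeasurable.integral_prod_right' (ν := segmentMeasure N) (f := fun q :
    (X × (Fin N → ℝ)) × ((Fin N → ℝ) × ℝ) => ∑ j, q.2.1 j * V q.1.1 (q.1.2 - q.2.2 • q.2.1) j)
    (Measurable.stronglyMeasurable ?_)).measurable
  have hVseg : Measurable fun q : (X × (Fin N → ℝ)) × ((Fin N → ℝ) × ℝ) =>
      V q.1.1 (q.1.2 - q.2.2 • q.2.1) :=
    hV.comp (f := fun q : (X × (Fin N → ℝ)) × ((Fin N → ℝ) × ℝ) =>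
      (q.1.1, q.1.2 - q.2.2 • q.2.1)) (by fun_prop)
  exact Finset.measurable_fun_sum _ fun j _ =>
    Measurable.mul (by fun_prop) ((measurable_pi_apply j).comp hVseg)

lemma measurable_corrector {X : Type*} [MeasurableSpace X] {V : X → (Fin N → ℝ) → Fin N → ℝ}
    (hV : Measurable fun p : X × (Fin N → ℝ) => V p.1 p.2) :
    Measurable fun p : X × (Fin N → ℝ) => corrector (V p.1) p.2 := by
  have hpot := measurable_segmentPotential hV
  exact hpot.sub ((hpot.stronglyMeasurable.integral_prod_right').measurable.comp measurable_fst)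

lemma abs_sum_mul_le_card_mul_enorm2 {a : Fin N → ℝ} (ha : ∀ j, |a j| ≤ 1) (w : Fin N → ℝ) :
    |∑ j, a j * w j| ≤ N * enorm2 w := by
  calc |∑ j, a j * w j| ≤ ∑ j, |a j * w j| := Finset.abs_sum_le_sum_abs _ _
    _ ≤ ∑ _j : Fin N, enorm2 w := Finset.sum_le_sum fun j _ => by
        rw [abs_mul]
        exact (mul_le_of_le_one_left (abs_nonneg _) (ha j)).trans (abs_apply_le_enorm2 w j)
    _ = N * enorm2 w := by simp

variable {Φ : ℝ → ℝ}

-- The factor is `N + 1` rather than `N` to avoid a division by zero when `N = 0`.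
lemma ofReal_segmentPotential_div_le (hΦ : IsYoung Φ) (hvm : Measurable v) {δ : ℝ} (hδ : 0 < δ)
    (y : Fin N → ℝ) :
    ENNReal.ofReal (Φ |segmentPotential v y / ((N + 1) * δ)|) ≤
      modular Φ (segmentMeasure N) fun r => enorm2 (v (y - r.2 • r.1)) / δ := by
  have hmeas : Measurable fun r : (Fin N → ℝ) × ℝ => enorm2 (v (y - r.2 • r.1)) / δ :=
    (measurable_enorm2.comp (by fun_prop)).div_const δ
  rw [segmentPotential, ← integral_div]
  refine hΦ.ofReal_abs_integral_le_modular hmeas.aestronglyMeasurable ?_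
  filter_upwards [ae_segmentMeasure_abs_apply_le_one] with r hr
  set w := v (y - r.2 • r.1)
  have hw := enorm2_nonneg w
  rw [abs_div, abs_div, abs_of_pos (by positivity : 0 < (N + 1) * δ), abs_of_nonneg hw,
    abs_of_pos hδ, div_le_div_iff₀ (by positivity) hδ]
  calc |∑ j, r.1 j * w j| * δ ≤ N * enorm2 w * δ := by
        gcongr
        exact abs_sum_mul_le_card_mul_enorm2 hr w
    _ ≤ enorm2 w * ((N + 1) * δ) := by nlinarith [mul_nonneg hw hδ.le]

lemma modular_segmentPotential_div_le (hΦ : IsYoung Φ) (hvm : Measurable v)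
    (hvp : IsLatticePeriodic v) {δ : ℝ} (hδ : 0 < δ) :
    modular Φ (volume.restrict (Ycube N)) (fun y => segmentPotential v y / ((N + 1) * δ)) ≤
      modular Φ (volume.restrict (Ycube N)) fun y => enorm2 (v y) / δ := by
  set G : (Fin N → ℝ) → ℝ≥0∞ := fun y => ENNReal.ofReal (Φ |enorm2 (v y) / δ|)
  have hGm : Measurable G := (hΦ.continuous_comp_abs.measurable.comp
    ((measurable_enorm2.comp hvm).div_const δ)).ennreal_ofReal
  have hGp : IsLatticePeriodic G := hvp.comp_left fun w => ENNReal.ofReal (Φ |enorm2 w / δ|)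
  calc modular Φ (volume.restrict (Ycube N)) (fun y => segmentPotential v y / ((N + 1) * δ))
      ≤ ∫⁻ y in Ycube N, ∫⁻ r, G (y - r.2 • r.1) ∂segmentMeasure N :=
        lintegral_mono fun y => ofReal_segmentPotential_div_le hΦ hvm hδ y
    _ = ∫⁻ r, (∫⁻ y in Ycube N, G (y - r.2 • r.1)) ∂segmentMeasure N :=
        lintegral_lintegral_swap (Measurable.aemeasurable (by fun_prop))
    _ = ∫⁻ y in Ycube N, G y := by
        simp only [sub_eq_add_neg, hGp.setLIntegral_comp_add, lintegral_const, measure_univ,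
          mul_one]

lemma luxNorm_corrector_lt_top {X : Type*} [MeasurableSpace X] {ν : Measure X}
    (hΦ : IsYoung Φ) {V : X → (Fin N → ℝ) → Fin N → ℝ}
    (hV : Measurable fun p : X × (Fin N → ℝ) => V p.1 p.2) (hVp : ∀ x, IsLatticePeriodic (V x))
    (hlux : luxNorm Φ (ν.prod (volume.restrict (Ycube N))) (fun p => enorm2 (V p.1 p.2)) < ⊤) :
    luxNorm Φ (ν.prod (volume.restrict (Ycube N))) (fun p => corrector (V p.1) p.2) < ⊤ := by
  obtain ⟨δ, hδ, hle⟩ := luxNorm_lt_top_iff.1 hlux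
  refine luxNorm_lt_top_iff.2 ⟨(N + 1) * δ * 2, by positivity, le_trans ?_ hle⟩
  have hprod {f : X × (Fin N → ℝ) → ℝ} (hf : Measurable f) :
      modular Φ (ν.prod (volume.restrict (Ycube N))) f =
        ∫⁻ x, modular Φ (volume.restrict (Ycube N)) (fun y => f (x, y)) ∂ν :=
    lintegral_prod _ (hΦ.continuous_comp_abs.measurable.comp hf).ennreal_ofReal.aemeasurable
  rw [hprod ((measurable_corrector hV).div_const _),
    hprod (f := fun p => enorm2 (V p.1 p.2) / δ) ((measurable_enorm2.comp hV).div_const _)]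
  refine lintegral_mono fun x => ?_
  have hVx : Measurable (V x) := hV.comp measurable_prodMk_left
  have hpot : Measurable (segmentPotential (V x)) :=
    (measurable_segmentPotential hV).comp measurable_prodMk_left
  have hcenter := hΦ.modular_sub_integral_div_two_le (ν := volume.restrict (Ycube N))
    (hpot.div_const ((N + 1) * δ)).aestronglyMeasurable
  simp only [integral_div, ← sub_div, div_div] at hcenter
  exact hcenter.trans (modular_segmentPotential_div_le hΦ hVx (hVp x) hδ)

end Corrector

/-! ### Random test functions and separation -/

/-- Bounded measurable functions, the test functions in the random variable. The bound is everywhere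
rather than almost everywhere, so that it survives composition with the flow. -/
structure IsBoundedMeasurable {X : Type*} [MeasurableSpace X] (ψ : X → ℝ) : Prop where
  measurable : Measurable ψ
  exists_forall_abs_le : ∃ C : ℝ, ∀ x, |ψ x| ≤ C

/-- The average `∫ ρ(s) ψ(T(s)ω) ds` of an observable `ψ` along the flow. Unlike `ψ`, it is smooth
along orbits, with derivatives that fall on the kernel `ρ`. -/
def mollify {N : ℕ} {Ω : Type*} (T : (Fin N → ℝ) → Ω → Ω) (ρ : (Fin N → ℝ) → ℝ) (ψ : Ω → ℝ)
    (ω : Ω) : ℝ :=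
  ∫ s, ρ s * ψ (T s ω)

namespace IsBoundedMeasurable

variable {X Z : Type*} [MeasurableSpace X] [MeasurableSpace Z] {ψ χ : X → ℝ}

protected lemma comp (hψ : IsBoundedMeasurable ψ) {f : Z → X} (hf : Measurable f) :
    IsBoundedMeasurable fun z => ψ (f z) :=
  ⟨hψ.measurable.comp hf, hψ.exists_forall_abs_le.imp fun _ hC _ => hC _⟩

protected lemma mul (hψ : IsBoundedMeasurable ψ) (hχ : IsBoundedMeasurable χ) :
    IsBoundedMeasurable fun x => ψ x * χ x := by
  obtain ⟨C, hC⟩ := hψ.exists_forall_abs_le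
  obtain ⟨D, hD⟩ := hχ.exists_forall_abs_le
  refine ⟨hψ.measurable.mul hχ.measurable, C * D, fun x => ?_⟩
  rw [abs_mul]
  exact mul_le_mul (hC x) (hD x) (abs_nonneg _) ((abs_nonneg _).trans (hC x))

lemma indicator_one {A : Set X} (hA : MeasurableSet A) :
    IsBoundedMeasurable (A.indicator fun _ => (1 : ℝ)) :=
  ⟨measurable_const.indicator hA, 1, fun x => by by_cases hx : x ∈ A <;> simp [hx]⟩

lemma integrable_mul (hψ : IsBoundedMeasurable ψ) {ν : Measure X} {F : X → ℝ}
    (hF : Integrable F ν) : Integrable (fun x => F x * ψ x) ν := by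
  obtain ⟨C, hC⟩ := hψ.exists_forall_abs_le
  exact hF.mul_bdd (c := C) hψ.measurable.aestronglyMeasurable (Eventually.of_forall hC)

end IsBoundedMeasurable

protected lemma IsTestFunction.isBoundedMeasurable {N : ℕ} {Q : Set (Fin N → ℝ)}
    {φ : (Fin N → ℝ) → ℝ} (hφ : IsTestFunction Q φ) : IsBoundedMeasurable φ :=
  ⟨hφ.continuous.measurable, hφ.exists_forall_abs_le⟩

protected lemma IsSmoothPeriodic.isBoundedMeasurable {N : ℕ} {g : (Fin N → ℝ) → ℝ}
    (hg : IsSmoothPeriodic g) : IsBoundedMeasurable g :=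
  ⟨hg.continuous.measurable, hg.exists_forall_abs_le⟩

lemma ae_eq_zero_of_forall_setIntegral_prod_eq_zero {X Z : Type*}
    [MeasurableSpace X] [MeasurableSpace Z] {ν : Measure X} {μ : Measure Z} {F : X × Z → ℝ}
    (hF : Integrable F (ν.prod μ))
    (h : ∀ B, MeasurableSet B → ∀ A, MeasurableSet A → ∫ p in B ×ˢ A, F p ∂ν.prod μ = 0) :
    F =ᵐ[ν.prod μ] 0 := by
  refine hF.ae_eq_of_withDensityᵥ_eq (integrable_zero _ _ _) ?_
  rw [withDensityᵥ_zero]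
  refine VectorMeasure.ext_of_generateFrom _ ?_ generateFrom_prod.symm isPiSystem_prod ?_
  · rintro _ ⟨B, hB, A, hA, rfl⟩
    rw [withDensityᵥ_apply hF (hB.prod hA), h B hB A hA]
    rfl
  · rw [withDensityᵥ_apply hF .univ, ← Set.univ_prod_univ, h _ .univ _ .univ]
    rfl

section Separation

variable {N : ℕ} {Ω : Type*} [MeasurableSpace Ω] {μ : Measure Ω} [SFinite μ]
  {Q : Set (Fin N → ℝ)} {F : (Fin N → ℝ) × Ω → ℝ}

lemma ae_eq_zero_of_forall_integral_mul_mul_eq_zero (hQ : IsOpen Q)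
    (hF : Integrable F ((volume.restrict Q).prod μ))
    (h : ∀ φ, IsTestFunction Q φ → ∀ ψ, IsBoundedMeasurable ψ →
      ∫ p, F p * φ p.1 * ψ p.2 ∂(volume.restrict Q).prod μ = 0) :
    F =ᵐ[(volume.restrict Q).prod μ] 0 := by
  refine ae_eq_zero_of_forall_setIntegral_prod_eq_zero hF fun B _ A hA => ?_
  have hFA : Integrable F ((volume.restrict Q).prod (μ.restrict A)) :=
    hF.mono_measure (Measure.prod_mono le_rfl Measure.restrict_le_self)
  suffices hslice : ∀ᵐ x, x ∈ Q → ∫ ω in A, F (x, ω) ∂μ = 0 by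
    rw [setIntegral_prod _ hF.integrableOn]
    exact integral_eq_zero_of_ae (ae_restrict_of_ae ((ae_restrict_iff' hQ.measurableSet).2 hslice))
  refine hQ.ae_eq_zero_of_integral_contDiff_smul_eq_zero
    (IntegrableOn.locallyIntegrableOn hFA.integral_prod_left) fun φ hφ hφc hφQ => ?_
  have hφ' : IsTestFunction Q φ := ⟨hφ, hφc, hφQ⟩
  have hψ := IsBoundedMeasurable.indicator_one hA
  calc ∫ x, φ x • ∫ ω in A, F (x, ω) ∂μ
      = ∫ x in Q, φ x • ∫ ω in A, F (x, ω) ∂μ :=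
        (setIntegral_eq_integral_of_forall_compl_eq_zero fun x hx => by
          rw [image_eq_zero_of_notMem_tsupport (fun hx' => hx (hφQ hx')), zero_smul]).symm
    _ = ∫ x in Q, ∫ ω, F (x, ω) * φ x * A.indicator (fun _ => 1) ω ∂μ := by
        simp only [← integral_indicator hA, smul_eq_mul, ← integral_const_mul]
        congr 1 with x
        congr 1 with ω
        by_cases hω : ω ∈ A <;> simp [hω, mul_comm]
    _ = ∫ p, F p * φ p.1 * A.indicator (fun _ => 1) p.2 ∂(volume.restrict Q).prod μ :=
        (integral_prod _ ((hψ.comp measurable_snd).integrable_mul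
          ((hφ'.isBoundedMeasurable.comp measurable_fst).integrable_mul hF))).symm
    _ = 0 := h φ hφ' _ hψ

end Separation

namespace IsDynSys

variable {N : ℕ} {Ω : Type*} [MeasurableSpace Ω] {μ : Measure Ω} {T : (Fin N → ℝ) → Ω → Ω}
  {ρ : (Fin N → ℝ) → ℝ} {ψ : Ω → ℝ}

lemma measurable_comp (hT : IsDynSys μ T) {X : Type*} [MeasurableSpace X] {s : X → Fin N → ℝ}
    {ω : X → Ω} (hs : Measurable s) (hω : Measurable ω) : Measurable fun x => T (s x) (ω x) :=
  hT.2.2.2.comp (hs.prodMk hω)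

lemma add_apply (hT : IsDynSys μ T) (s t : Fin N → ℝ) (ω : Ω) : T (s + t) ω = T s (T t ω) :=
  congrFun (hT.2.1 s t) ω

lemma neg_apply_self (hT : IsDynSys μ T) (s : Fin N → ℝ) (ω : Ω) : T (-s) (T s ω) = ω := by
  rw [← hT.add_apply, neg_add_cancel, hT.1, id]

lemma measurePreserving (hT : IsDynSys μ T) (s : Fin N → ℝ) : MeasurePreserving (T s) μ μ :=
  hT.2.2.1 s

lemma measurePreserving_prodMk [SFinite μ] (hT : IsDynSys μ T) (ν : Measure (Fin N → ℝ))
    [SFinite ν] {s : (Fin N → ℝ) → Fin N → ℝ} (hs : Measurable s) :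
    MeasurePreserving (fun p : (Fin N → ℝ) × Ω => (p.1, T (s p.1) p.2)) (ν.prod μ) (ν.prod μ) :=
  (MeasurePreserving.id ν).skew_product (g := fun x => T (s x))
    (hT.measurable_comp (hs.comp measurable_fst) measurable_snd)
    (Eventually.of_forall fun x => (hT.measurePreserving (s x)).map_eq)

lemma isBoundedMeasurable_mollify (hT : IsDynSys μ T) (hρm : Measurable ρ) (hρ : Integrable ρ)
    (hψ : IsBoundedMeasurable ψ) : IsBoundedMeasurable (mollify T ρ ψ) where
  measurable := by
    have hmeas : Measurable fun p : Ω × (Fin N → ℝ) => ρ p.2 * ψ (T p.2 p.1) :=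
      (hρm.comp measurable_snd).mul
        (hψ.measurable.comp (hT.measurable_comp measurable_snd measurable_fst))
    exact hmeas.stronglyMeasurable.integral_prod_right'.measurable
  exists_forall_abs_le := by
    obtain ⟨C, hC⟩ := hψ.exists_forall_abs_le
    refine ⟨∫ s, ‖ρ s‖ * C, fun ω => (Real.norm_eq_abs _).ge.trans ?_⟩
    refine norm_integral_le_of_norm_le (hρ.norm.mul_const C) (Eventually.of_forall fun s => ?_)
    rw [norm_mul]
    exact mul_le_mul_of_nonneg_left (hC _) (norm_nonneg _)

lemma integral_comp_neg_mul_mul_eq_integral_mul_mollify [SFinite μ] (hT : IsDynSys μ T)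
    {f : Ω → ℝ} (hf : Integrable f μ) {U : Set (Fin N → ℝ)} [IsFiniteMeasure (volume.restrict U)]
    (hρ : IsTestFunction U ρ) (hψ : IsBoundedMeasurable ψ) :
    ∫ p, f (T (-p.1) p.2) * ρ p.1 * ψ p.2 ∂(volume.restrict U).prod μ =
      ∫ ω, f ω * mollify T ρ ψ ω ∂μ := by
  have hshift := hT.measurePreserving_prodMk (volume.restrict U) measurable_id
  have hinv := hT.measurePreserving_prodMk (volume.restrict U) measurable_neg
  have hbound : IsBoundedMeasurable fun p : (Fin N → ℝ) × Ω => ρ p.1 * ψ p.2 :=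
    (hρ.isBoundedMeasurable.comp measurable_fst).mul (hψ.comp measurable_snd)
  have hfsnd : Integrable (fun p : (Fin N → ℝ) × Ω => f p.2) ((volume.restrict U).prod μ) :=
    hf.comp_snd _
  have hint := hbound.integrable_mul (hinv.integrable_comp_of_integrable hfsnd)
  have hint' := hshift.integrable_comp_of_integrable hint
  calc ∫ p, f (T (-p.1) p.2) * ρ p.1 * ψ p.2 ∂(volume.restrict U).prod μ
      = ∫ p, f p.2 * (ρ p.1 * ψ (T p.1 p.2)) ∂(volume.restrict U).prod μ := by
        simp only [mul_assoc]
        have hmap := integral_map hshift.measurable.aemeasurable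
          (hshift.map_eq.symm ▸ hint.aestronglyMeasurable)
        rw [hshift.map_eq] at hmap
        simpa only [id, Function.comp_apply, hT.neg_apply_self] using hmap
    _ = ∫ ω, (∫ s in U, f ω * (ρ s * ψ (T s ω))) ∂μ := by
        refine integral_prod_symm _ ?_
        simpa only [id, Function.comp_def, hT.neg_apply_self] using hint'
    _ = ∫ ω, f ω * mollify T ρ ψ ω ∂μ := by
        congr! 2 with ω
        rw [integral_const_mul, mollify, setIntegral_eq_integral_of_forall_compl_eq_zero]
        intro s hs
        rw [image_eq_zero_of_notMem_tsupport fun hs' => hs (hρ.tsupport_subset hs'), zero_mul]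

lemma ae_eq_zero_of_forall_integral_mul_mollify_eq_zero [SFinite μ] (hT : IsDynSys μ T)
    {f : Ω → ℝ} (hf : Integrable f μ) {U : Set (Fin N → ℝ)} (hU : IsOpen U) (hUne : U.Nonempty)
    [IsFiniteMeasure (volume.restrict U)]
    (h : ∀ ρ, IsTestFunction U ρ → ∀ ψ, IsBoundedMeasurable ψ →
      ∫ ω, f ω * mollify T ρ ψ ω ∂μ = 0) :
    f =ᵐ[μ] 0 := by
  have hinv := hT.measurePreserving_prodMk (volume.restrict U) measurable_neg
  have hzero : ∀ᵐ p ∂(volume.restrict U).prod μ, f (T (-p.1) p.2) = 0 :=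
    ae_eq_zero_of_forall_integral_mul_mul_eq_zero hU
      (hinv.integrable_comp_of_integrable (hf.comp_snd _)) fun ρ hρ ψ hψ =>
        (hT.integral_comp_neg_mul_mul_eq_integral_mul_mollify hf hρ hψ).trans (h ρ hρ ψ hψ)
  have : NeZero (volume.restrict U) := ⟨by simpa using (hU.measure_pos volume hUne).ne'⟩
  obtain ⟨s, hs⟩ := (Measure.ae_ae_of_ae_prod hzero).exists
  filter_upwards [(hT.measurePreserving s).quasiMeasurePreserving.ae hs] with ω hω
  rwa [hT.neg_apply_self] at hω

lemma ae_eq_zero_of_forall_integral_mul_mul_mollify_eq_zero [SFinite μ] (hT : IsDynSys μ T)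
    {Q : Set (Fin N → ℝ)} (hQ : IsOpen Q) {F : (Fin N → ℝ) × Ω → ℝ}
    (hF : Integrable F ((volume.restrict Q).prod μ))
    (h : ∀ φ, IsTestFunction Q φ → ∀ ρ, IsTestFunction Set.univ ρ →
      ∀ ψ, IsBoundedMeasurable ψ →
        ∫ p, F p * φ p.1 * mollify T ρ ψ p.2 ∂(volume.restrict Q).prod μ = 0) :
    F =ᵐ[(volume.restrict Q).prod μ] 0 := by
  refine ae_eq_zero_of_forall_integral_mul_mul_eq_zero hQ hF fun φ hφ ψ hψ => ?_
  have hFφ : Integrable (fun p => F p * φ p.1) ((volume.restrict Q).prod μ) :=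
    (hφ.isBoundedMeasurable.comp measurable_fst).integrable_mul hF
  have hslice {χ : Ω → ℝ} (hχ : IsBoundedMeasurable χ) :
      ∫ p, F p * φ p.1 * χ p.2 ∂(volume.restrict Q).prod μ =
        ∫ ω, (∫ x in Q, F (x, ω) * φ x) * χ ω ∂μ := by
    rw [integral_prod_symm _ ((hχ.comp measurable_snd).integrable_mul hFφ)]
    simp only [integral_mul_const]
  have : IsFiniteMeasure (volume.restrict (Metric.ball (0 : Fin N → ℝ) 1)) :=
    isFiniteMeasure_restrict.2 measure_ball_lt_top.ne
  have hzero : (fun ω => ∫ x in Q, F (x, ω) * φ x) =ᵐ[μ] 0 :=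
    hT.ae_eq_zero_of_forall_integral_mul_mollify_eq_zero (U := Metric.ball 0 1)
      hFφ.integral_prod_right Metric.isOpen_ball (Metric.nonempty_ball.2 one_pos)
      fun ρ hρ χ hχ => by
        rw [← hslice (hT.isBoundedMeasurable_mollify hρ.continuous.measurable hρ.integrable hχ)]
        exact h φ hφ ρ ⟨hρ.contDiff, hρ.hasCompactSupport, Set.subset_univ _⟩ χ hχ
  rw [hslice hψ]
  refine integral_eq_zero_of_ae ?_
  filter_upwards [hzero] with ω hω
  simp [hω]

end IsDynSys

/-! ### The curl identity for weak gradients at a fixed scale -/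

/-- `w` is the weak `x`-gradient of `u` on `Q × Ω`. Integrability is part of the definition, so that
the integrals are not junk values. -/
structure HasWeakGradient {N : ℕ} {Ω : Type*} [MeasurableSpace Ω] (μ : Measure Ω)
    (Q : Set (Fin N → ℝ)) (u : (Fin N → ℝ) → Ω → ℝ) (w : (Fin N → ℝ) → Ω → Fin N → ℝ) : Prop where
  integrable : Integrable (fun p => u p.1 p.2) ((volume.restrict Q).prod μ)
  integrable_grad : ∀ i, Integrable (fun p => w p.1 p.2 i) ((volume.restrict Q).prod μ)
  integral_mul_partialDeriv : ∀ i φ, IsTestFunction Q φ → ∀ ψ, IsBoundedMeasurable ψ →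
    ∫ p, u p.1 p.2 * partialDeriv i φ p.1 * ψ p.2 ∂(volume.restrict Q).prod μ =
      -∫ p, w p.1 p.2 i * φ p.1 * ψ p.2 ∂(volume.restrict Q).prod μ

/-- The pairing of `f` with an oscillating test function that occurs in two-scale convergence, where
`c = ε⁻¹` and `d = ε⁻²`. -/
def twoScalePairing {N : ℕ} {Ω : Type*} [MeasurableSpace Ω] (μ : Measure Ω)
    (T : (Fin N → ℝ) → Ω → Ω) (Q : Set (Fin N → ℝ)) (c d : ℝ) (f : (Fin N → ℝ) → Ω → ℝ)
    (φ : (Fin N → ℝ) → ℝ) (χ : Ω → ℝ) (g : (Fin N → ℝ) → ℝ) : ℝ :=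
  ∫ x in Q, ∫ ω, f x ω * φ x * χ (T (c • x) ω) * g (d • x) ∂μ

/-- The deterministic part of an oscillating test function built on a mollified observable: after
the change of variables `z = s + c • x`, the mollification kernel becomes a function of `x`. -/
def oscillatingTest {N : ℕ} (c d : ℝ) (φ ρ g : (Fin N → ℝ) → ℝ) (z x : Fin N → ℝ) : ℝ :=
  φ x * g (d • x) * ρ (z - c • x)

lemma IsTestFunction.oscillatingTest {N : ℕ} {Q : Set (Fin N → ℝ)} {φ g ρ : (Fin N → ℝ) → ℝ}
    (hφ : IsTestFunction Q φ) (hρ : ContDiff ℝ (⊤ : ℕ∞) ρ) (hg : ContDiff ℝ (⊤ : ℕ∞) g)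
    (c d : ℝ) (z : Fin N → ℝ) : IsTestFunction Q (oscillatingTest c d φ ρ g z) :=
  (hφ.mul_right (g := fun x => g (d • x)) (by fun_prop)).mul_right
    (g := fun x => ρ (z - c • x)) (by fun_prop)

lemma partialDeriv_oscillatingTest {N : ℕ} {φ ρ g : (Fin N → ℝ) → ℝ}
    (hφ : ContDiff ℝ (⊤ : ℕ∞) φ) (hρ : ContDiff ℝ (⊤ : ℕ∞) ρ) (hg : ContDiff ℝ (⊤ : ℕ∞) g)
    (c d : ℝ) (j : Fin N) (z x : Fin N → ℝ) :
    partialDeriv j (oscillatingTest c d φ ρ g z) x =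
      d * oscillatingTest c d φ ρ (partialDeriv j g) z x +
        oscillatingTest c d (partialDeriv j φ) ρ g z x -
        c * oscillatingTest c d φ (partialDeriv j ρ) g z x := by
  have hasFDerivAt {f : (Fin N → ℝ) → ℝ} (hf : ContDiff ℝ (⊤ : ℕ∞) f) (y : Fin N → ℝ) :
      HasFDerivAt f (fderiv ℝ f y) y := (hf.differentiable (by simp) y).hasFDerivAt
  have hdil : HasFDerivAt (fun x : Fin N → ℝ => d • x)
      (d • ContinuousLinearMap.id ℝ (Fin N → ℝ)) x := (hasFDerivAt_id x).const_smul d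
  have hrefl : HasFDerivAt (fun x : Fin N → ℝ => z - c • x)
      (-(c • ContinuousLinearMap.id ℝ (Fin N → ℝ))) x :=
    ((hasFDerivAt_id x).const_smul c).const_sub z
  have hprod := ((hasFDerivAt hφ x).mul ((hasFDerivAt hg _).comp x hdil)).mul
    ((hasFDerivAt hρ _).comp x hrefl)
  rw [partialDeriv, HasFDerivAt.fderiv (f := oscillatingTest c d φ ρ g z) hprod]
  simp only [oscillatingTest, Pi.mul_apply, Function.comp_apply, add_apply, smul_apply,
    ContinuousLinearMap.comp_apply, neg_apply, ContinuousLinearMap.id_apply, smul_eq_mul,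
    map_smul, map_neg]
  ring

section Fubini

variable {N : ℕ} {Ω : Type*} [MeasurableSpace Ω] {μ : Measure Ω}
  {T : (Fin N → ℝ) → Ω → Ω} {Q : Set (Fin N → ℝ)} {f : (Fin N → ℝ) → Ω → ℝ}
  {φ ρ g : (Fin N → ℝ) → ℝ} {ψ : Ω → ℝ}

lemma integral_oscillatingTest_mul_eq (hT : IsDynSys μ T) (φ ρ g : (Fin N → ℝ) → ℝ) (ψ : Ω → ℝ)
    (c d : ℝ) (x : Fin N → ℝ) (ω : Ω) :
    ∫ z, oscillatingTest c d φ ρ g z x * ψ (T z ω) =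
      φ x * mollify T ρ ψ (T (c • x) ω) * g (d • x) := by
  calc ∫ z, oscillatingTest c d φ ρ g z x * ψ (T z ω)
      = ∫ s, oscillatingTest c d φ ρ g (s + c • x) x * ψ (T (s + c • x) ω) :=
        (integral_add_right_eq_self _ (c • x)).symm
    _ = ∫ s, φ x * g (d • x) * (ρ s * ψ (T s (T (c • x) ω))) := by
        simp only [oscillatingTest, add_sub_cancel_right, hT.add_apply, mul_assoc]
    _ = φ x * mollify T ρ ψ (T (c • x) ω) * g (d • x) := by
        rw [integral_const_mul, mollify]
        ring

variable [SFinite μ]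

lemma integrable_mul_oscillatingTest_mul (hT : IsDynSys μ T)
    (hf : Integrable (fun p => f p.1 p.2) ((volume.restrict Q).prod μ))
    (hφ : IsBoundedMeasurable φ) (hρ : Integrable ρ) (hg : IsBoundedMeasurable g)
    (hψ : IsBoundedMeasurable ψ) (c d : ℝ) :
    Integrable (fun q : ((Fin N → ℝ) × Ω) × (Fin N → ℝ) =>
        f q.1.1 q.1.2 * oscillatingTest c d φ ρ g q.2 q.1.1 * ψ (T q.2 q.1.2))
      (((volume.restrict Q).prod μ).prod volume) := by
  have hshear : MeasurePreserving
      (fun q : ((Fin N → ℝ) × Ω) × (Fin N → ℝ) => (q.1, q.2 - c • q.1.1))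
      (((volume.restrict Q).prod μ).prod volume) (((volume.restrict Q).prod μ).prod volume) :=
    (MeasurePreserving.id _).skew_product
      (g := fun (p : (Fin N → ℝ) × Ω) (z : Fin N → ℝ) => z - c • p.1) (by fun_prop)
      (Eventually.of_forall fun p => (measurePreserving_sub_right volume (c • p.1)).map_eq)
  have hbound : IsBoundedMeasurable fun q : ((Fin N → ℝ) × Ω) × (Fin N → ℝ) =>
      φ q.1.1 * g (d • q.1.1) * ψ (T q.2 q.1.2) :=
    ((hφ.comp (by fun_prop)).mul (hg.comp (by fun_prop))).mul
      (hψ.comp (hT.measurable_comp measurable_snd (by fun_prop)))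
  refine (hbound.integrable_mul (hshear.integrable_comp_of_integrable (hf.mul_prod hρ))).congr
    (Eventually.of_forall fun q => ?_)
  simp only [Function.comp_apply, oscillatingTest]
  ring

lemma integral_mul_oscillatingTest_mul_eq_twoScalePairing (hT : IsDynSys μ T)
    (hf : Integrable (fun p => f p.1 p.2) ((volume.restrict Q).prod μ))
    (hφ : IsBoundedMeasurable φ) (hρ : Integrable ρ) (hg : IsBoundedMeasurable g)
    (hψ : IsBoundedMeasurable ψ) (c d : ℝ) :
    ∫ q, f q.1.1 q.1.2 * oscillatingTest c d φ ρ g q.2 q.1.1 * ψ (T q.2 q.1.2)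
        ∂((volume.restrict Q).prod μ).prod volume =
      twoScalePairing μ T Q c d f φ (mollify T ρ ψ) g := by
  have hint := integrable_mul_oscillatingTest_mul hT hf hφ hρ hg hψ c d
  rw [integral_prod _ hint, integral_prod _ hint.integral_prod_left, twoScalePairing]
  simp only [mul_assoc (f _ _), integral_const_mul, integral_oscillatingTest_mul_eq hT]

lemma integral_mul_partialDeriv_oscillatingTest_mul_eq_twoScalePairing (hT : IsDynSys μ T)
    (hf : Integrable (fun p => f p.1 p.2) ((volume.restrict Q).prod μ))
    (hφ : IsTestFunction Q φ) (hρ : IsTestFunction Set.univ ρ) (hg : IsSmoothPeriodic g)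
    (hψ : IsBoundedMeasurable ψ) (c d : ℝ) (j : Fin N) :
    ∫ z, (∫ p, f p.1 p.2 * partialDeriv j (oscillatingTest c d φ ρ g z) p.1 * ψ (T z p.2)
        ∂(volume.restrict Q).prod μ) =
      d * twoScalePairing μ T Q c d f φ (mollify T ρ ψ) (partialDeriv j g) +
        twoScalePairing μ T Q c d f (partialDeriv j φ) (mollify T ρ ψ) g -
        c * twoScalePairing μ T Q c d f φ (mollify T (partialDeriv j ρ) ψ) g := by
  have hφb := hφ.isBoundedMeasurable
  have hφjb := (hφ.partialDeriv j).isBoundedMeasurable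
  have hgb := hg.isBoundedMeasurable
  have hgjb := (hg.partialDeriv j).isBoundedMeasurable
  have hρi := hρ.integrable
  have hρji := (hρ.partialDeriv j).integrable
  have hint_g := (integrable_mul_oscillatingTest_mul hT hf hφb hρi hgjb hψ c d).const_mul d
  have hint_φ := integrable_mul_oscillatingTest_mul hT hf hφjb hρi hgb hψ c d
  have hint_ρ := (integrable_mul_oscillatingTest_mul hT hf hφb hρji hgb hψ c d).const_mul c
  rw [← integral_mul_oscillatingTest_mul_eq_twoScalePairing hT hf hφb hρi hgjb hψ,
    ← integral_mul_oscillatingTest_mul_eq_twoScalePairing hT hf hφjb hρi hgb hψ,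
    ← integral_mul_oscillatingTest_mul_eq_twoScalePairing hT hf hφb hρji hgb hψ,
    ← integral_const_mul, ← integral_const_mul, ← integral_add hint_g hint_φ,
    ← integral_sub (hint_g.fun_add hint_φ) hint_ρ]
  refine Eq.trans ?_ (integral_prod_symm _ ((hint_g.fun_add hint_φ).sub hint_ρ)).symm
  congr 1 with z
  congr 1 with p
  rw [partialDeriv_oscillatingTest hφ.contDiff hρ.contDiff hg.contDiff, Pi.sub_apply]
  ring

end Fubini

namespace HasWeakGradient

variable {N : ℕ} {Ω : Type*} [MeasurableSpace Ω] {μ : Measure Ω}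
  {T : (Fin N → ℝ) → Ω → Ω} {Q : Set (Fin N → ℝ)} {u : (Fin N → ℝ) → Ω → ℝ}
  {w : (Fin N → ℝ) → Ω → Fin N → ℝ} {φ ρ g : (Fin N → ℝ) → ℝ} {ψ : Ω → ℝ}

lemma integral_grad_mul_partialDeriv_comm (hw : HasWeakGradient μ Q u w) (hφ : IsTestFunction Q φ)
    (hψ : IsBoundedMeasurable ψ) (i j : Fin N) :
    ∫ p, w p.1 p.2 i * partialDeriv j φ p.1 * ψ p.2 ∂(volume.restrict Q).prod μ =
      ∫ p, w p.1 p.2 j * partialDeriv i φ p.1 * ψ p.2 ∂(volume.restrict Q).prod μ := by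
  rw [← neg_inj, ← hw.integral_mul_partialDeriv i _ (hφ.partialDeriv j) ψ hψ,
    ← hw.integral_mul_partialDeriv j _ (hφ.partialDeriv i) ψ hψ]
  simp only [partialDeriv_comm hφ.contDiff i j]

variable [SFinite μ]

lemma twoScalePairing_grad_comm (hw : HasWeakGradient μ Q u w)
    (hT : IsDynSys μ T) (hφ : IsTestFunction Q φ) (hρ : IsTestFunction Set.univ ρ)
    (hg : IsSmoothPeriodic g) (hψ : IsBoundedMeasurable ψ) (c d : ℝ) (i j : Fin N) :
    d * twoScalePairing μ T Q c d (w · · i) φ (mollify T ρ ψ) (partialDeriv j g) +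
        twoScalePairing μ T Q c d (w · · i) (partialDeriv j φ) (mollify T ρ ψ) g -
        c * twoScalePairing μ T Q c d (w · · i) φ (mollify T (partialDeriv j ρ) ψ) g =
      d * twoScalePairing μ T Q c d (w · · j) φ (mollify T ρ ψ) (partialDeriv i g) +
        twoScalePairing μ T Q c d (w · · j) (partialDeriv i φ) (mollify T ρ ψ) g -
        c * twoScalePairing μ T Q c d (w · · j) φ (mollify T (partialDeriv i ρ) ψ) g := by
  rw [← integral_mul_partialDeriv_oscillatingTest_mul_eq_twoScalePairing hT
      (hw.integrable_grad i) hφ hρ hg hψ,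
    ← integral_mul_partialDeriv_oscillatingTest_mul_eq_twoScalePairing hT
      (hw.integrable_grad j) hφ hρ hg hψ]
  congr 1 with z
  exact hw.integral_grad_mul_partialDeriv_comm (hφ.oscillatingTest hρ.contDiff hg.contDiff c d z)
    (hψ.comp (hT.measurePreserving z).measurable) i j

end HasWeakGradient

/-! ### Curl-freeness of the two-scale limit -/

lemma eq_of_tendsto_of_forall_inv_sq_mul_add_sub_eq {e A B C A' B' C' : ℕ → ℝ}
    {a b c a' b' c' : ℝ} (hpos : ∀ k, 0 < e k) (he : Tendsto e atTop (𝓝 0))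
    (hA : Tendsto A atTop (𝓝 a)) (hB : Tendsto B atTop (𝓝 b)) (hC : Tendsto C atTop (𝓝 c))
    (hA' : Tendsto A' atTop (𝓝 a')) (hB' : Tendsto B' atTop (𝓝 b'))
    (hC' : Tendsto C' atTop (𝓝 c'))
    (h : ∀ k, (e k ^ 2)⁻¹ * A k + B k - (e k)⁻¹ * C k =
      (e k ^ 2)⁻¹ * A' k + B' k - (e k)⁻¹ * C' k) :
    a = a' := by
  have hscaled (k : ℕ) :
      A k + e k ^ 2 * B k - e k * C k = A' k + e k ^ 2 * B' k - e k * C' k := by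
    have hk := (hpos k).ne'
    have hmul := congrArg (e k ^ 2 * ·) (h k)
    field_simp at hmul
    linarith
  have hlim {A B C : ℕ → ℝ} {a b c : ℝ} (hA : Tendsto A atTop (𝓝 a))
      (hB : Tendsto B atTop (𝓝 b)) (hC : Tendsto C atTop (𝓝 c)) :
      Tendsto (fun k => A k + e k ^ 2 * B k - e k * C k) atTop (𝓝 a) := by
    simpa using (hA.add ((he.pow 2).mul hB)).sub (he.mul hC)
  exact tendsto_nhds_unique ((hlim hA hB hC).congr hscaled) (hlim hA' hB' hC')

section TwoScaleLimit

variable {N : ℕ} {Ω : Type*} [MeasurableSpace Ω] {μ : Measure Ω} {T : (Fin N → ℝ) → Ω → Ω}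
  {Q : Set (Fin N → ℝ)} {ε : ℕ → ℝ} {f : ℕ → (Fin N → ℝ) → Ω → ℝ}
  {v : (Fin N → ℝ) → Ω → (Fin N → ℝ) → ℝ} {φ ρ g : (Fin N → ℝ) → ℝ} {χ ψ : Ω → ℝ}

lemma integrable_setIntegral_mul [SFinite μ]
    (hv : Integrable (fun q : ((Fin N → ℝ) × Ω) × (Fin N → ℝ) => v q.1.1 q.1.2 q.2)
      (((volume.restrict Q).prod μ).prod (volume.restrict (Ycube N))))
    (hg : IsBoundedMeasurable g) :
    Integrable (fun p => ∫ y in Ycube N, v p.1 p.2 y * g y) ((volume.restrict Q).prod μ) :=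
  ((hg.comp measurable_snd).integrable_mul hv).integral_prod_left

lemma integrable_setIntegral_mul_mul_mul [SFinite μ]
    (hv : Integrable (fun q : ((Fin N → ℝ) × Ω) × (Fin N → ℝ) => v q.1.1 q.1.2 q.2)
      (((volume.restrict Q).prod μ).prod (volume.restrict (Ycube N))))
    (hφ : IsBoundedMeasurable φ) (hχ : IsBoundedMeasurable χ) (hg : IsBoundedMeasurable g) :
    Integrable (fun p => (∫ y in Ycube N, v p.1 p.2 y * g y) * φ p.1 * χ p.2)
      ((volume.restrict Q).prod μ) :=
  (hχ.comp measurable_snd).integrable_mul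
    ((hφ.comp measurable_fst).integrable_mul (integrable_setIntegral_mul hv hg))

lemma tendsto_twoScalePairing [SFinite μ] (hf : WeakStoch2Scale μ T Q ε f v)
    (hv : Integrable (fun q : ((Fin N → ℝ) × Ω) × (Fin N → ℝ) => v q.1.1 q.1.2 q.2)
      (((volume.restrict Q).prod μ).prod (volume.restrict (Ycube N))))
    (hφ : IsTestFunction Q φ) (hχ : IsBoundedMeasurable χ) (hg : IsSmoothPeriodic g) :
    Tendsto (fun k => twoScalePairing μ T Q (ε k)⁻¹ (ε k ^ 2)⁻¹ (f k) φ χ g) atTop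
      (𝓝 (∫ p, (∫ y in Ycube N, v p.1 p.2 y * g y) * φ p.1 * χ p.2
        ∂(volume.restrict Q).prod μ)) := by
  rw [integral_prod _ (integrable_setIntegral_mul_mul_mul hv hφ.isBoundedMeasurable hχ
    hg.isBoundedMeasurable)]
  simp only [← integral_mul_const, mul_right_comm _ (g _)]
  exact hf φ hφ.contDiff hφ.hasCompactSupport hφ.tsupport_subset χ hχ.measurable
    hχ.exists_forall_abs_le g hg.continuous hg.periodic

variable [SFinite μ] {u : ℕ → (Fin N → ℝ) → Ω → ℝ} {w : ℕ → (Fin N → ℝ) → Ω → Fin N → ℝ}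
  {V : (Fin N → ℝ) → Ω → (Fin N → ℝ) → Fin N → ℝ}

lemma integral_setIntegral_mul_partialDeriv_mul_mollify_comm (hT : IsDynSys μ T)
    (hε : ∀ k, 0 < ε k) (hε0 : Tendsto ε atTop (𝓝 0))
    (hw : ∀ k, HasWeakGradient μ Q (u k) (w k))
    (hV : ∀ i, Integrable (fun q : ((Fin N → ℝ) × Ω) × (Fin N → ℝ) => V q.1.1 q.1.2 q.2 i)
      (((volume.restrict Q).prod μ).prod (volume.restrict (Ycube N))))
    (hconv : ∀ i, WeakStoch2Scale μ T Q ε (fun k x ω => w k x ω i) fun x ω y => V x ω y i)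
    (hφ : IsTestFunction Q φ) (hρ : IsTestFunction Set.univ ρ) (hg : IsSmoothPeriodic g)
    (hψ : IsBoundedMeasurable ψ) (i j : Fin N) :
    ∫ p, (∫ y in Ycube N, V p.1 p.2 y i * partialDeriv j g y) * φ p.1 * mollify T ρ ψ p.2
        ∂(volume.restrict Q).prod μ =
      ∫ p, (∫ y in Ycube N, V p.1 p.2 y j * partialDeriv i g y) * φ p.1 * mollify T ρ ψ p.2
        ∂(volume.restrict Q).prod μ := by
  have hmollify {ρ : (Fin N → ℝ) → ℝ} (hρ : IsTestFunction Set.univ ρ) :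
      IsBoundedMeasurable (mollify T ρ ψ) :=
    hT.isBoundedMeasurable_mollify hρ.continuous.measurable hρ.integrable hψ
  have hlim_g (i j : Fin N) :=
    tendsto_twoScalePairing (hconv i) (hV i) hφ (hmollify hρ) (hg.partialDeriv j)
  have hlim_φ (i j : Fin N) :=
    tendsto_twoScalePairing (hconv i) (hV i) (hφ.partialDeriv j) (hmollify hρ) hg
  have hlim_ρ (i j : Fin N) :=
    tendsto_twoScalePairing (hconv i) (hV i) hφ (hmollify (hρ.partialDeriv j)) hg
  exact eq_of_tendsto_of_forall_inv_sq_mul_add_sub_eq hε hε0 (hlim_g i j) (hlim_φ i j)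
    (hlim_ρ i j) (hlim_g j i) (hlim_φ j i) (hlim_ρ j i) fun k =>
      (hw k).twoScalePairing_grad_comm hT hφ hρ hg hψ _ _ i j

lemma ae_setIntegral_mul_partialDeriv_comm (hT : IsDynSys μ T) (hQ : IsOpen Q)
    (hε : ∀ k, 0 < ε k) (hε0 : Tendsto ε atTop (𝓝 0))
    (hw : ∀ k, HasWeakGradient μ Q (u k) (w k))
    (hV : ∀ i, Integrable (fun q : ((Fin N → ℝ) × Ω) × (Fin N → ℝ) => V q.1.1 q.1.2 q.2 i)
      (((volume.restrict Q).prod μ).prod (volume.restrict (Ycube N))))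
    (hconv : ∀ i, WeakStoch2Scale μ T Q ε (fun k x ω => w k x ω i) fun x ω y => V x ω y i)
    (hg : IsSmoothPeriodic g) (i j : Fin N) :
    ∀ᵐ p ∂(volume.restrict Q).prod μ, ∫ y in Ycube N, V p.1 p.2 y i * partialDeriv j g y =
      ∫ y in Ycube N, V p.1 p.2 y j * partialDeriv i g y := by
  have hint (i j : Fin N) :
      Integrable (fun p => ∫ y in Ycube N, V p.1 p.2 y i * partialDeriv j g y)
        ((volume.restrict Q).prod μ) :=
    integrable_setIntegral_mul (v := fun x ω y => V x ω y i) (hV i)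
      (hg.partialDeriv j).isBoundedMeasurable
  have hzero := hT.ae_eq_zero_of_forall_integral_mul_mul_mollify_eq_zero hQ
    ((hint i j).sub (hint j i)) fun φ hφ ρ hρ ψ hψ => by
      have hχ := hT.isBoundedMeasurable_mollify hρ.continuous.measurable hρ.integrable hψ
      have hint' (i j : Fin N) := integrable_setIntegral_mul_mul_mul
        (v := fun x ω y => V x ω y i) (hV i) hφ.isBoundedMeasurable hχ
        (hg.partialDeriv j).isBoundedMeasurable
      simp only [Pi.sub_apply, sub_mul]
      rw [integral_sub (hint' i j) (hint' j i), sub_eq_zero]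
      exact integral_setIntegral_mul_partialDeriv_mul_mollify_comm hT hε hε0 hw hV hconv hφ hρ hg
        hψ i j
  filter_upwards [hzero] with p hp
  exact sub_eq_zero.1 hp

end TwoScaleLimit

lemma continuous_integral_mul_continuousMap {X : Type*} [TopologicalSpace X] [CompactSpace X]
    [MeasurableSpace X] [OpensMeasurableSpace X] {ν : Measure X} {f : X → ℝ}
    (hf : Integrable f ν) : Continuous fun G : C(X, ℝ) => ∫ x, f x * G x ∂ν := by
  have hint (G : C(X, ℝ)) : Integrable (fun x => f x * G x) ν :=
    hf.mul_bdd (c := ‖G‖) G.continuous.aestronglyMeasurable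
      (Eventually.of_forall G.norm_coe_le_norm)
  refine (LipschitzWith.of_dist_le_mul (K := (∫ x, ‖f x‖ ∂ν).toNNReal) fun G H => ?_).continuous
  rw [Real.coe_toNNReal _ (integral_nonneg fun _ => norm_nonneg _), dist_eq_norm, dist_eq_norm,
    ← integral_sub (hint G) (hint H), ← integral_mul_const]
  refine norm_integral_le_of_norm_le (hf.norm.mul_const _) (Eventually.of_forall fun x => ?_)
  rw [← mul_sub, norm_mul]
  exact mul_le_mul_of_nonneg_left ((G - H).norm_coe_le_norm x) (norm_nonneg _)

instance (N : ℕ) : CompactSpace (Ycube N) := isCompact_iff_compactSpace.1 isCompact_Icc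

/-- The restriction of `∂g/∂y_j` to the unit cube, as a point of the separable space `C(Y)`. -/
def cubePartialDeriv {N : ℕ} (j : Fin N) (g : {g : (Fin N → ℝ) → ℝ // IsSmoothPeriodic g}) :
    C(Ycube N, ℝ) :=
  ⟨fun y => partialDeriv j g.1 y, (g.2.partialDeriv j).continuous.comp continuous_subtype_val⟩

lemma continuous_setIntegral_mul_partialDeriv {N : ℕ}
    {Z : Type*} [TopologicalSpace Z] {G : Z → {g : (Fin N → ℝ) → ℝ // IsSmoothPeriodic g}}
    {j : Fin N} (hG : Continuous fun z => cubePartialDeriv j (G z))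
    {f : (Fin N → ℝ) → ℝ} (hf : IntegrableOn f (Ycube N)) :
    Continuous fun z => ∫ y in Ycube N, f y * partialDeriv j (G z).1 y := by
  have hcube : MeasurableSet (Ycube N) := measurableSet_Icc
  simp only [← integral_subtype_comap hcube]
  exact (continuous_integral_mul_continuousMap
    ((integrableOn_iff_comap_subtypeVal hcube).1 hf)).comp hG

-- The gradients of the test functions live in the separable space `C(Y)^N`, hence countably many
-- of them suffice; this brings the quantifier over `g` inside the almost-everywhere statement.
lemma exists_seq_isSmoothPeriodic_isCurlFree_of_forall (N : ℕ) :
    ∃ s : ℕ → (Fin N → ℝ) → ℝ, (∀ n, IsSmoothPeriodic (s n)) ∧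
      ∀ v : (Fin N → ℝ) → Fin N → ℝ, (∀ j, IntegrableOn (fun y => v y j) (Ycube N)) →
        (∀ n i j, ∫ y in Ycube N, v y i * partialDeriv j (s n) y =
          ∫ y in Ycube N, v y j * partialDeriv i (s n) y) →
        IsCurlFree v := by
  let G := {g : (Fin N → ℝ) → ℝ // IsSmoothPeriodic g}
  let grad : G → Fin N → C(Ycube N, ℝ) := fun g j => cubePartialDeriv j g
  let _ : TopologicalSpace G := TopologicalSpace.induced grad inferInstance
  have : SecondCountableTopology G := TopologicalSpace.secondCountableTopology_induced _ _ grad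
  have : Nonempty G := ⟨⟨fun _ => 0, contDiff_const, fun _ _ => rfl⟩⟩
  have hgrad : Continuous grad := continuous_induced_dom
  refine ⟨fun n => (TopologicalSpace.denseSeq G n).1, fun n => (TopologicalSpace.denseSeq G n).2,
    fun v hv hs g hg i j => ?_⟩
  have hcont (i j : Fin N) :
      Continuous fun g : G => ∫ y in Ycube N, v y i * partialDeriv j g.1 y :=
    continuous_setIntegral_mul_partialDeriv (continuous_pi_iff.1 hgrad j) (hv i)
  exact isClosed_property (TopologicalSpace.denseRange_denseSeq G)
    (isClosed_eq (hcont i j) (hcont j i)) (fun n => hs n i j) ⟨g, hg⟩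

lemma ae_isCurlFree_of_weakStoch2Scale {N : ℕ} {Ω : Type*} [MeasurableSpace Ω] {μ : Measure Ω}
    [SFinite μ] {T : (Fin N → ℝ) → Ω → Ω} (hT : IsDynSys μ T) {Q : Set (Fin N → ℝ)}
    (hQ : IsOpen Q) {ε : ℕ → ℝ} (hε : ∀ k, 0 < ε k) (hε0 : Tendsto ε atTop (𝓝 0))
    {u : ℕ → (Fin N → ℝ) → Ω → ℝ} {w : ℕ → (Fin N → ℝ) → Ω → Fin N → ℝ}
    (hw : ∀ k, HasWeakGradient μ Q (u k) (w k)) {V : (Fin N → ℝ) → Ω → (Fin N → ℝ) → Fin N → ℝ}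
    (hV : ∀ i, Integrable (fun q : ((Fin N → ℝ) × Ω) × (Fin N → ℝ) => V q.1.1 q.1.2 q.2 i)
      (((volume.restrict Q).prod μ).prod (volume.restrict (Ycube N))))
    (hconv : ∀ i, WeakStoch2Scale μ T Q ε (fun k x ω => w k x ω i) fun x ω y => V x ω y i) :
    ∀ᵐ p ∂(volume.restrict Q).prod μ, IsCurlFree (V p.1 p.2) := by
  obtain ⟨s, hs, hcurl⟩ := exists_seq_isSmoothPeriodic_isCurlFree_of_forall N
  have hslice : ∀ᵐ p ∂(volume.restrict Q).prod μ, ∀ j,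
      IntegrableOn (fun y => V p.1 p.2 y j) (Ycube N) :=
    ae_all_iff.2 fun j => (hV j).prod_right_ae
  have hcomm : ∀ᵐ p ∂(volume.restrict Q).prod μ, ∀ n i j,
      ∫ y in Ycube N, V p.1 p.2 y i * partialDeriv j (s n) y =
        ∫ y in Ycube N, V p.1 p.2 y j * partialDeriv i (s n) y :=
    ae_all_iff.2 fun n => ae_all_iff.2 fun i => ae_all_iff.2 fun j =>
      ae_setIntegral_mul_partialDeriv_comm hT hQ hε hε0 hw hV hconv (hs n) i j
  filter_upwards [hslice, hcomm] with p hp hpc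
  exact hcurl _ hp hpc

/-! ### The periodic corrector -/

lemma hasWeakGradient_of_luxNorm_lt_top {N : ℕ} {Ω : Type*} [MeasurableSpace Ω] {μ : Measure Ω}
    [IsFiniteMeasure μ] {Φ : ℝ → ℝ} (hΦ : IsYoung Φ) {Q : Set (Fin N → ℝ)}
    [IsFiniteMeasure (volume.restrict Q)] {u : (Fin N → ℝ) → Ω → ℝ}
    {w : (Fin N → ℝ) → Ω → Fin N → ℝ} (hu : Measurable fun p : (Fin N → ℝ) × Ω => u p.1 p.2)
    (hulux : luxNorm Φ ((volume.restrict Q).prod μ) (fun p => u p.1 p.2) < ⊤)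
    (hw : Measurable fun p : (Fin N → ℝ) × Ω => w p.1 p.2)
    (hwlux : luxNorm Φ ((volume.restrict Q).prod μ) (fun p => enorm2 (w p.1 p.2)) < ⊤)
    (hgrad : ∀ i φ, IsTestFunction Q φ → ∀ ψ, IsBoundedMeasurable ψ →
      ∫ p, u p.1 p.2 * partialDeriv i φ p.1 * ψ p.2 ∂(volume.restrict Q).prod μ =
        -∫ p, w p.1 p.2 i * φ p.1 * ψ p.2 ∂(volume.restrict Q).prod μ) :
    HasWeakGradient μ Q u w where
  integrable := integrable_of_luxNorm_lt_top hΦ hu.aestronglyMeasurable hulux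
  integrable_grad := integrable_apply_of_luxNorm_enorm2_lt_top hΦ hw hwlux
  integral_mul_partialDeriv := hgrad

theorem stmt13_general {N : ℕ} {Ω : Type*} [MeasurableSpace Ω] {μ : Measure Ω}
    [IsFiniteMeasure μ] {Φ : ℝ → ℝ} (hΦ : IsYoung Φ) {T : (Fin N → ℝ) → Ω → Ω}
    (hT : IsDynSys μ T) {Q : Set (Fin N → ℝ)} (hQo : IsOpen Q) (hQ : volume Q ≠ ⊤)
    {ε : ℕ → ℝ} (hε : ∀ k, 0 < ε k) (hε0 : Tendsto ε atTop (𝓝 0))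
    {u : ℕ → (Fin N → ℝ) → Ω → ℝ} {Du : ℕ → (Fin N → ℝ) → Ω → Fin N → ℝ}
    (hgrad : ∀ k, HasWeakGradient μ Q (u k) (Du k))
    {V : (Fin N → ℝ) → Ω → (Fin N → ℝ) → Fin N → ℝ}
    (hVmeas : Measurable fun p : ((Fin N → ℝ) × Ω) × (Fin N → ℝ) => V p.1.1 p.1.2 p.2)
    (hVper : ∀ x ω, IsLatticePeriodic (V x ω))
    (hVbd : luxNorm Φ (((volume.restrict Q).prod μ).prod (volume.restrict (Ycube N)))
      (fun p => enorm2 (V p.1.1 p.1.2 p.2)) < ⊤)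
    (hconvD : ∀ j, WeakStoch2Scale μ T Q ε (fun k x ω => Du k x ω j) fun x ω y => V x ω y j) :
    ∃ u₂ : (Fin N → ℝ) → Ω → (Fin N → ℝ) → ℝ,
      (Measurable fun p : ((Fin N → ℝ) × Ω) × (Fin N → ℝ) => u₂ p.1.1 p.1.2 p.2) ∧
      (∀ x ω, ZPeriodic (u₂ x ω)) ∧
      luxNorm Φ (((volume.restrict Q).prod μ).prod (volume.restrict (Ycube N)))
        (fun p => u₂ p.1.1 p.1.2 p.2) < ⊤ ∧
      (∀ᵐ p ∂(volume.restrict Q).prod μ, ∫ y in Ycube N, u₂ p.1 p.2 y = 0) ∧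
      ∀ᵐ p ∂(volume.restrict Q).prod μ, ∀ g : (Fin N → ℝ) → ℝ, ContDiff ℝ (⊤ : ℕ∞) g →
        ZPeriodic g → ∀ i, ∫ y in Ycube N, u₂ p.1 p.2 y * fderiv ℝ g y (Pi.single i 1) =
          -∫ y in Ycube N, (V p.1 p.2 y i - ∫ z in Ycube N, V p.1 p.2 z i) * g y := by
  have : IsFiniteMeasure (volume.restrict Q) := isFiniteMeasure_restrict.2 hQ
  have hVint (j : Fin N) : Integrable (fun p => V p.1.1 p.1.2 p.2 j)
      (((volume.restrict Q).prod μ).prod (volume.restrict (Ycube N))) :=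
    integrable_apply_of_luxNorm_enorm2_lt_top hΦ hVmeas hVbd j
  have hslice : ∀ᵐ p ∂(volume.restrict Q).prod μ, ∀ j,
      IntegrableOn (fun y => V p.1 p.2 y j) (Ycube N) :=
    ae_all_iff.2 fun j => (hVint j).prod_right_ae
  have hVm (x : Fin N → ℝ) (ω : Ω) : Measurable (V x ω) :=
    hVmeas.comp (measurable_prodMk_left (x := (x, ω)))
  have hcurl : ∀ᵐ p ∂(volume.restrict Q).prod μ, IsCurlFree (V p.1 p.2) :=
    ae_isCurlFree_of_weakStoch2Scale hT hQo hε hε0 hgrad hVint hconvD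
  refine ⟨fun x ω => corrector (V x ω), ?_, ?_, ?_, ?_, ?_⟩
  · exact measurable_corrector (V := fun p : (Fin N → ℝ) × Ω => V p.1 p.2) hVmeas
  · exact fun x ω => isLatticePeriodic_corrector (hVper x ω)
  · exact luxNorm_corrector_lt_top (V := fun p : (Fin N → ℝ) × Ω => V p.1 p.2) hΦ hVmeas
      (fun p => hVper p.1 p.2) hVbd
  · filter_upwards [hslice] with p hp
    exact setIntegral_corrector_eq_zero (hVm _ _) (hVper _ _) hp
  · filter_upwards [hslice, hcurl] with p hp hpcurl g hg hgper i
    exact setIntegral_corrector_mul_partialDeriv (hVm _ _) (hVper _ _) hp hpcurl ⟨hg, hgper⟩ i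

/-- existence of the periodic corrector `u₂`. -/
theorem stmt13 {N : ℕ} (hN : 1 ≤ N) {Ω : Type*} [MeasurableSpace Ω] (μ : Measure Ω)
    [IsProbabilityMeasure μ] (hgen : CountGenModNull μ)
    (Φ : ℝ → ℝ) (hΦ : IsYoung Φ) (hΦ2 : Delta2 Φ) (hΦc2 : Delta2 (conjY Φ))
    (T : (Fin N → ℝ) → Ω → Ω) (hT : IsDynSys μ T)
    (Q : Set (Fin N → ℝ)) (hQo : IsOpen Q) (hQb : Bornology.IsBounded Q)
    (ε : ℕ → ℝ) (hε : ∀ k, ε k ∈ Set.Ioc (0 : ℝ) 1) (hε0 : Tendsto ε atTop (nhds 0))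
    (u : ℕ → (Fin N → ℝ) → Ω → ℝ) (Du : ℕ → (Fin N → ℝ) → Ω → Fin N → ℝ)
    (humeas : ∀ k, Measurable fun p : (Fin N → ℝ) × Ω => u k p.1 p.2)
    (hubd : (⨆ k, luxNorm Φ ((volume.restrict Q).prod μ) fun p => u k p.1 p.2) < ⊤)
    (u₀ : (Fin N → ℝ) → Ω → (Fin N → ℝ) → ℝ)
    (hu₀meas : Measurable fun p : ((Fin N → ℝ) × Ω) × (Fin N → ℝ) => u₀ p.1.1 p.1.2 p.2)
    (hu₀per : ∀ x ω, ZPeriodic (u₀ x ω))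
    (hu₀bd : luxNorm Φ (((volume.restrict Q).prod μ).prod (volume.restrict (Ycube N)))
      (fun p => u₀ p.1.1 p.1.2 p.2) < ⊤)
    (hconv : WeakStoch2Scale μ T Q ε u u₀)
    (hDumeas : ∀ k, Measurable fun p : (Fin N → ℝ) × Ω => Du k p.1 p.2)
    (hgrad : ∀ (k : ℕ) (i : Fin N) (φ : (Fin N → ℝ) → ℝ),
      ContDiff ℝ (⊤ : ℕ∞) φ → HasCompactSupport φ → tsupport φ ⊆ Q →
      ∀ ψ : Ω → ℝ, Measurable ψ → (∃ C : ℝ, ∀ ω, |ψ ω| ≤ C) →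
        (∫ p, u k p.1 p.2 * fderiv ℝ φ p.1 (Pi.single i 1) * ψ p.2
            ∂((volume.restrict Q).prod μ)) =
          -(∫ p, Du k p.1 p.2 i * φ p.1 * ψ p.2 ∂((volume.restrict Q).prod μ)))
    (hDubd : (⨆ k, luxNorm Φ ((volume.restrict Q).prod μ)
      fun p => enorm2 (Du k p.1 p.2)) < ⊤)
    (V : (Fin N → ℝ) → Ω → (Fin N → ℝ) → Fin N → ℝ)
    (hVmeas : Measurable fun p : ((Fin N → ℝ) × Ω) × (Fin N → ℝ) => V p.1.1 p.1.2 p.2)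
    (hVper : ∀ (x : Fin N → ℝ) (ω : Ω) (y : Fin N → ℝ) (k : Fin N → ℤ),
      V x ω (y + fun i => (k i : ℝ)) = V x ω y)
    (hVbd : luxNorm Φ (((volume.restrict Q).prod μ).prod (volume.restrict (Ycube N)))
      (fun p => enorm2 (V p.1.1 p.1.2 p.2)) < ⊤)
    (hconvD : ∀ j : Fin N, WeakStoch2Scale μ T Q ε
      (fun k x ω => Du k x ω j) (fun x ω y => V x ω y j)) :
    ∃ u₂ : (Fin N → ℝ) → Ω → (Fin N → ℝ) → ℝ,
      (Measurable fun p : ((Fin N → ℝ) × Ω) × (Fin N → ℝ) => u₂ p.1.1 p.1.2 p.2) ∧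
      (∀ x ω, ZPeriodic (u₂ x ω)) ∧
      luxNorm Φ (((volume.restrict Q).prod μ).prod (volume.restrict (Ycube N)))
        (fun p => u₂ p.1.1 p.1.2 p.2) < ⊤ ∧
      (∀ᵐ p ∂((volume.restrict Q).prod μ), (∫ y in Ycube N, u₂ p.1 p.2 y) = 0) ∧
      (∀ᵐ p ∂((volume.restrict Q).prod μ),
        ∀ g : (Fin N → ℝ) → ℝ, ContDiff ℝ (⊤ : ℕ∞) g → ZPeriodic g →
          ∀ i : Fin N,
            (∫ y in Ycube N, u₂ p.1 p.2 y * fderiv ℝ g y (Pi.single i 1)) =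
              -(∫ y in Ycube N,
                (V p.1 p.2 y i - ∫ z in Ycube N, V p.1 p.2 z i) * g y)) := by
  have : IsFiniteMeasure (volume.restrict Q) := isFiniteMeasure_restrict.2 hQb.measure_lt_top.ne
  exact stmt13_general hΦ hT hQo hQb.measure_lt_top.ne (fun k => (hε k).1) hε0
    (fun k => hasWeakGradient_of_luxNorm_lt_top hΦ (humeas k)
      ((le_iSup _ k).trans_lt hubd) (hDumeas k) ((le_iSup _ k).trans_lt hDubd)
      fun i φ hφ ψ hψ => hgrad k i φ hφ.contDiff hφ.hasCompactSupport hφ.tsupport_subset ψ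
        hψ.measurable hψ.exists_forall_abs_le)
    hVmeas hVper hVbd hconvD
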